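/- arXiv:1904.00590 — 2 statements merged into one kernel-verified Lean document; each statement's English description precedes it below -/
import Mathlib

section
/- For any rational number α > 1 that is not an integer, and any real c with 0 < c < 1, the set of positive integers n such that the distance from α^n to the nearest integer is less than c^n is finite. -/
namespace Mah
open MvPolynomial

set_option linter.unusedSectionVars false
set_option linter.unusedSimpArgs false

noncomputable section

variable {σ : Type} [Fintype σ] {R : Type} [CommRing R]

/-- product of binomials -/
def bin (i J : σ →₀ ℕ) : ℕ := ∏ h, (i h).choose (J h)

/-- Hasse derivative -/
def hd (J : σ →₀ ℕ) : MvPolynomial σ R →ₗ[R] MvPolynomial σ R :=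
  (basisMonomials σ R).constr R (fun i => monomial (i - J) (bin i J : R))

lemma hd_monomial (J i : σ →₀ ℕ) (a : R) :
    hd J (monomial i a) = monomial (i - J) (a * (bin i J : R)) := by
  have h : (monomial i a : MvPolynomial σ R) = a • basisMonomials σ R i := by
    simp [coe_basisMonomials, smul_monomial]
  rw [h, map_smul, hd, Module.Basis.constr_basis, smul_monomial, smul_eq_mul]

lemma bin_eq_zero {i J : σ →₀ ℕ} (h : ¬ J ≤ i) : bin i J = 0 := by
  rw [Finsupp.le_def] at h
  push Not at h
  obtain ⟨x, hx⟩ := h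
  exact Finset.prod_eq_zero (Finset.mem_univ x) (Nat.choose_eq_zero_of_lt hx)

lemma coeff_hd (J K : σ →₀ ℕ) (P : MvPolynomial σ R) :
    coeff K (hd J P) = coeff (K + J) P * (bin (K + J) J : R) := by
  classical
  induction P using MvPolynomial.induction_on' with
  | monomial i a =>
    rw [hd_monomial, coeff_monomial, coeff_monomial]
    by_cases hJ : J ≤ i
    · have : (i - J = K) ↔ (i = K + J) := by
        rw [tsub_eq_iff_eq_add_of_le hJ]
      by_cases h : i = K + J
      · rw [if_pos (this.2 h), if_pos h, h]
      · rw [if_neg (fun h' => h (this.1 h')), if_neg h, zero_mul]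
    · rw [bin_eq_zero hJ]
      have : i ≠ K + J := fun h => hJ (h ▸ le_add_self)
      simp [this]
  | add p q hp hq => rw [map_add, coeff_add, hp, hq, coeff_add, add_mul]

lemma hd_zero (P : MvPolynomial σ R) : hd 0 P = P := by
  ext K
  rw [coeff_hd]
  simp [bin]

lemma map_hd {S : Type} [CommRing S] (f : R →+* S) (J : σ →₀ ℕ) (P : MvPolynomial σ R) :
    map f (hd J P) = hd J (map f P) := by
  ext K
  rw [coeff_map, coeff_hd, coeff_hd, coeff_map, map_mul, map_natCast]

lemma pderiv_hd [DecidableEq σ] (J : σ →₀ ℕ) (h : σ) (P : MvPolynomial σ R) :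
    pderiv h (hd J P) = ((J h + 1 : ℕ) : R) • hd (J + Finsupp.single h 1) P := by
  induction P using MvPolynomial.induction_on' with
  | monomial i a =>
    rw [hd_monomial, hd_monomial, pderiv_monomial, smul_monomial, smul_eq_mul, tsub_tsub]
    congr 1
    have : bin i J * (i - J) h = (J h + 1) * bin i (J + Finsupp.single h 1) := by
      unfold bin
      rw [← Finset.mul_prod_erase _ _ (Finset.mem_univ h),
        ← Finset.mul_prod_erase _ _ (Finset.mem_univ h)]
      have e : ∏ x ∈ Finset.univ.erase h, (i x).choose ((J + Finsupp.single h 1 : σ →₀ ℕ) x)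
          = ∏ x ∈ Finset.univ.erase h, (i x).choose (J x) := by
        apply Finset.prod_congr rfl
        intro x hx
        have : h ≠ x := fun h' => (Finset.mem_erase.1 hx).1 h'.symm
        simp [Finsupp.single_apply, this]
      rw [e]
      have := Nat.choose_succ_right_eq (i h) (J h)
      simp only [Finsupp.add_apply, Finsupp.single_eq_same, Finsupp.tsub_apply]
      calc _ = (∏ x ∈ Finset.univ.erase h, (i x).choose (J x)) *
            ((i h).choose (J h) * (i h - J h)) := by ring
        _ = (∏ x ∈ Finset.univ.erase h, (i x).choose (J x)) *
            ((i h).choose (J h + 1) * (J h + 1)) := by rw [this]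
        _ = _ := by ring
    rw [mul_assoc, ← Nat.cast_mul, this]
    push_cast; ring
  | add p q hp hq => simp only [map_add, hp, hq, smul_add]

/-- shift -/
def sh (ξ : σ → R) : MvPolynomial σ R →ₐ[R] MvPolynomial σ R :=
  aeval (fun h => X h + C (ξ h))

lemma sh_X (ξ : σ → R) (h : σ) : sh ξ (X h) = X h + C (ξ h) := by simp [sh]

lemma sh_sh (ξ ζ : σ → R) (P : MvPolynomial σ R) : sh ξ (sh ζ P) = sh (ξ + ζ) P := by
  have : (sh ξ).comp (sh ζ) = sh (ξ + ζ) := by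
    apply algHom_ext
    intro h
    simp [sh, add_assoc]
  exact DFunLike.congr_fun this P

lemma sh_zero (P : MvPolynomial σ R) : sh 0 P = P := by
  have : (sh (0 : σ → R)) = AlgHom.id R _ := by
    apply algHom_ext
    intro h
    simp [sh]
  rw [this]; rfl

lemma sh_injective (ξ : σ → R) : Function.Injective (sh ξ) := by
  intro P Q h
  have := congrArg (sh (-ξ)) h
  simpa [sh_sh, sh_zero] using this

lemma map_sh {S : Type} [CommRing S] (f : R →+* S) (ξ : σ → R) (P : MvPolynomial σ R) :
    map f (sh ξ P) = sh (fun h => f (ξ h)) (map f P) := by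
  induction P using MvPolynomial.induction_on with
  | C a => simp [sh]
  | add p q hp hq => simp only [map_add, hp, hq]
  | mul_X p n hp => simp only [map_mul, hp, sh_X, map_X, map_add, map_C]

lemma pderiv_sh [DecidableEq σ] (ξ : σ → R) (h : σ) (P : MvPolynomial σ R) :
    pderiv h (sh ξ P) = sh ξ (pderiv h P) := by
  induction P using MvPolynomial.induction_on with
  | C a => simp [sh]
  | add p q hp hq => simp only [map_add, hp, hq]
  | mul_X p n hp =>
    simp only [map_mul, sh_X, Derivation.leibniz, hp, pderiv_X, map_add, pderiv_C, smul_eq_mul]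
    by_cases hn : n = h
    · subst hn; simp
    · simp [Pi.single_apply, hn]

lemma hd_sh (ξ : σ → ℚ) (J : σ →₀ ℕ) (P : MvPolynomial σ ℚ) :
    hd J (sh ξ P) = sh ξ (hd J P) := by
  classical
  induction hn : J.degree generalizing J with
  | zero =>
    have : J = 0 := (Finsupp.degree_eq_zero_iff _).1 hn
    rw [this, hd_zero, hd_zero]
  | succ d ih =>
    have hJ : J ≠ 0 := by rintro rfl; simp at hn
    obtain ⟨h, hh⟩ := Finsupp.ne_iff.1 hJ
    have hle : Finsupp.single h 1 ≤ J := by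
      rw [Finsupp.single_le_iff]; exact Nat.one_le_iff_ne_zero.2 hh
    obtain ⟨J', rfl⟩ : ∃ J', J = J' + Finsupp.single h 1 := ⟨J - Finsupp.single h 1, by
      rw [tsub_add_cancel_of_le hle]⟩
    have hd' : J'.degree = d := by simpa using hn
    have e := ih J' hd'
    have e2 := congrArg (pderiv h) e
    rw [pderiv_hd, pderiv_sh, pderiv_hd, map_smul] at e2
    have hne : ((J' h + 1 : ℕ) : ℚ) ≠ 0 := by positivity
    exact smul_right_injective _ hne e2

lemma coeff_zero_sh (ξ : σ → R) (P : MvPolynomial σ R) : coeff 0 (sh ξ P) = eval ξ P := by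
  have : (constantCoeff : MvPolynomial σ R →+* R).comp (sh ξ).toRingHom = eval ξ := by
    apply ringHom_ext
    · intro r; simp [sh]
    · intro h; simp [sh]
  exact DFunLike.congr_fun this P

lemma eval_hd (ξ : σ → ℚ) (J : σ →₀ ℕ) (P : MvPolynomial σ ℚ) :
    eval ξ (hd J P) = coeff J (sh ξ P) := by
  rw [← coeff_zero_sh, ← hd_sh, coeff_hd]
  simp [bin]

/-- weight -/
def wt (w : σ → ℝ) (J : σ →₀ ℕ) : ℝ := ∑ h, (J h : ℝ) * w h

lemma wt_add (w : σ → ℝ) (J K : σ →₀ ℕ) : wt w (J + K) = wt w J + wt w K := by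
  simp [wt, add_mul, Finset.sum_add_distrib]

lemma wt_nonneg {w : σ → ℝ} (hw : ∀ h, 0 ≤ w h) (J : σ →₀ ℕ) : 0 ≤ wt w J :=
  Finset.sum_nonneg (fun h _ => mul_nonneg (Nat.cast_nonneg _) (hw h))

/-- all exponents have weight at least t -/
def Ge (w : σ → ℝ) (t : ℝ) (P : MvPolynomial σ R) : Prop := ∀ K, coeff K P ≠ 0 → t ≤ wt w K

lemma Ge.mul {w : σ → ℝ} {s t : ℝ} {P Q : MvPolynomial σ R} (hP : Ge w s P) (hQ : Ge w t Q) :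
    Ge w (s + t) (P * Q) := by
  classical
  intro K hK
  rw [coeff_mul] at hK
  obtain ⟨x, hx, hne⟩ := Finset.exists_ne_zero_of_sum_ne_zero hK
  have h1 := hP x.1 (left_ne_zero_of_mul hne)
  have h2 := hQ x.2 (right_ne_zero_of_mul hne)
  rw [← Finset.HasAntidiagonal.mem_antidiagonal.1 hx, wt_add]
  linarith

lemma Ge.prod {ι : Type} {w : σ → ℝ} (s : Finset ι) (t : ι → ℝ) (P : ι → MvPolynomial σ R)
    (h : ∀ i ∈ s, Ge w (t i) (P i)) : Ge w (∑ i ∈ s, t i) (∏ i ∈ s, P i) := by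
  classical
  induction s using Finset.induction_on with
  | empty =>
    intro K hK
    have : K = 0 := by
      by_contra h'
      simp [coeff_one, Ne.symm h'] at hK
    simp [this, wt]
  | insert a s ha ih =>
    rw [Finset.sum_insert ha, Finset.prod_insert ha]
    exact (h a (Finset.mem_insert_self _ _)).mul
      (ih (fun i hi => h i (Finset.mem_insert_of_mem hi)))

lemma Ge.sum {ι : Type} {w : σ → ℝ} {t : ℝ} (s : Finset ι) (P : ι → MvPolynomial σ R)
    (h : ∀ i ∈ s, Ge w t (P i)) : Ge w t (∑ i ∈ s, P i) := by
  intro K hK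
  rw [coeff_sum] at hK
  obtain ⟨x, hx, hne⟩ := Finset.exists_ne_zero_of_sum_ne_zero hK
  exact h x hx K hne

lemma Ge.det {k : ℕ} {w : σ → ℝ} (t : Fin k → ℝ) (M : Matrix (Fin k) (Fin k) (MvPolynomial σ R))
    (h : ∀ i j, Ge w (t j) (M i j)) : Ge w (∑ j, t j) M.det := by
  rw [Matrix.det_apply]
  apply Ge.sum
  intro τ _
  have := Ge.prod (w := w) Finset.univ t (fun j => M (τ j) j) (fun j _ => h (τ j) j)
  intro K hK
  apply this K
  intro h0
  apply hK
  rcases Int.units_eq_one_or (Equiv.Perm.sign τ) with h' | h' <;> simp [h', h0]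

lemma Ge.hd {w : σ → ℝ} {t : ℝ} {P : MvPolynomial σ R} (hP : Ge w t P) (J : σ →₀ ℕ) :
    Ge w (t - wt w J) (Mah.hd J P) := by
  intro K hK
  rw [coeff_hd] at hK
  have := hP _ (left_ne_zero_of_mul hK)
  rw [wt_add] at this
  linarith

/-- l1 norm -/
def N (P : MvPolynomial σ ℤ) : ℕ := ∑ i ∈ P.support, (coeff i P).natAbs

lemma N_eq_sum (P : MvPolynomial σ ℤ) (s : Finset (σ →₀ ℕ)) (h : P.support ⊆ s) :
    N P = ∑ i ∈ s, (coeff i P).natAbs := by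
  apply Finset.sum_subset h
  intro x _ hx
  simpa using hx

lemma N_add (P Q : MvPolynomial σ ℤ) : N (P + Q) ≤ N P + N Q := by
  classical
  rw [N_eq_sum P (P.support ∪ Q.support) Finset.subset_union_left,
    N_eq_sum Q (P.support ∪ Q.support) Finset.subset_union_right,
    N_eq_sum (P + Q) (P.support ∪ Q.support) support_add, ← Finset.sum_add_distrib]
  apply Finset.sum_le_sum
  intro i _
  rw [coeff_add]
  exact Int.natAbs_add_le _ _

lemma N_sum {ι : Type} (s : Finset ι) (P : ι → MvPolynomial σ ℤ) :
    N (∑ i ∈ s, P i) ≤ ∑ i ∈ s, N (P i) := by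
  classical
  induction s using Finset.induction_on with
  | empty => simp [N]
  | insert a s ha ih =>
    rw [Finset.sum_insert ha, Finset.sum_insert ha]
    exact (N_add _ _).trans (by omega)

lemma N_monomial (i : σ →₀ ℕ) (a : ℤ) : N (monomial i a) = a.natAbs := by
  classical
  rw [N_eq_sum _ {i} support_monomial_subset]
  simp

lemma N_mul (P Q : MvPolynomial σ ℤ) : N (P * Q) ≤ N P * N Q := by
  classical
  have : P * Q = ∑ i ∈ P.support, ∑ j ∈ Q.support,
      monomial (i + j) (coeff i P * coeff j Q) := by
    conv_lhs => rw [P.as_sum, Q.as_sum, Finset.sum_mul_sum]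
    simp only [monomial_mul]
  rw [this]
  refine (N_sum _ _).trans ?_
  rw [N, N, Finset.sum_mul_sum]
  apply Finset.sum_le_sum
  intro i _
  refine (N_sum _ _).trans ?_
  apply Finset.sum_le_sum
  intro j _
  rw [N_monomial, Int.natAbs_mul]

lemma N_prod {ι : Type} (s : Finset ι) (P : ι → MvPolynomial σ ℤ) :
    N (∏ i ∈ s, P i) ≤ ∏ i ∈ s, N (P i) := by
  classical
  induction s using Finset.induction_on with
  | empty =>
    have : (1 : MvPolynomial σ ℤ) = monomial 0 1 := rfl
    simp only [Finset.prod_empty]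
    rw [this, N_monomial]; rfl
  | insert a s ha ih =>
    rw [Finset.prod_insert ha, Finset.prod_insert ha]
    exact (N_mul _ _).trans (Nat.mul_le_mul le_rfl ih)

lemma N_neg (P : MvPolynomial σ ℤ) : N (-P) = N P := by
  simp [N]

lemma N_det {k : ℕ} (M : Matrix (Fin k) (Fin k) (MvPolynomial σ ℤ)) (B : ℕ)
    (h : ∀ i j, N (M i j) ≤ B) : N M.det ≤ k.factorial * B ^ k := by
  rw [Matrix.det_apply]
  refine (N_sum _ _).trans ?_
  have : ∀ τ ∈ (Finset.univ : Finset (Equiv.Perm (Fin k))),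
      N (Equiv.Perm.sign τ • ∏ i, M (τ i) i) ≤ B ^ k := by
    intro τ _
    have e : N (Equiv.Perm.sign τ • ∏ i, M (τ i) i) = N (∏ i, M (τ i) i) := by
      rcases Int.units_eq_one_or (Equiv.Perm.sign τ) with h' | h' <;> simp [h', N_neg]
    rw [e]
    refine (N_prod _ _).trans ?_
    refine (Finset.prod_le_prod' (fun i _ => h (τ i) i)).trans ?_
    simp
  refine (Finset.sum_le_card_nsmul _ _ _ this).trans ?_
  simp [Fintype.card_perm]

lemma bin_le (r : σ → ℕ) (i J : σ →₀ ℕ) (h : ∀ x, i x ≤ r x) : bin i J ≤ 2 ^ (∑ x, r x) := by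
  rw [← Finset.prod_pow_eq_pow_sum]
  apply Finset.prod_le_prod'
  intro x _
  exact (Nat.choose_le_two_pow _ _).trans (Nat.pow_le_pow_right (by norm_num) (h x))

lemma N_hd (r : σ → ℕ) (J : σ →₀ ℕ) (P : MvPolynomial σ ℤ) (h : ∀ x, degreeOf x P ≤ r x) :
    N (hd J P) ≤ 2 ^ (∑ x, r x) * N P := by
  classical
  have : hd J P = ∑ i ∈ P.support, monomial (i - J) (coeff i P * (bin i J : ℤ)) := by
    conv_lhs => rw [P.as_sum, map_sum]
    simp only [hd_monomial]
  rw [this]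
  refine (N_sum _ _).trans ?_
  rw [N, Finset.mul_sum]
  apply Finset.sum_le_sum
  intro i hi
  rw [N_monomial, Int.natAbs_mul, mul_comm]
  apply Nat.mul_le_mul _ le_rfl
  simp only [Int.natAbs_natCast]
  exact bin_le r i J (fun x => degreeOf_le_iff.1 (h x) i hi)

lemma degreeOf_hd (J : σ →₀ ℕ) (P : MvPolynomial σ R) (x : σ) :
    degreeOf x (hd J P) ≤ degreeOf x P := by
  rw [degreeOf_le_iff]
  intro K hK
  rw [mem_support_iff, coeff_hd] at hK
  have := degreeOf_le_iff.1 (le_refl (degreeOf x P)) (K + J)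
    (mem_support_iff.2 (left_ne_zero_of_mul hK))
  simp at this; omega

lemma degreeOf_det {k : ℕ} (M : Matrix (Fin k) (Fin k) (MvPolynomial σ R)) (B : ℕ) (x : σ)
    (h : ∀ i j, degreeOf x (M i j) ≤ B) : degreeOf x M.det ≤ k * B := by
  rw [Matrix.det_apply]
  refine (degreeOf_sum_le _ _ _).trans ?_
  apply Finset.sup_le
  intro τ _
  have e : degreeOf x (Equiv.Perm.sign τ • ∏ i, M (τ i) i) = degreeOf x (∏ i, M (τ i) i) := by
    rcases Int.units_eq_one_or (Equiv.Perm.sign τ) with h' | h' <;> simp [h', degreeOf]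
  rw [e]
  refine (degreeOf_prod_le _ _ _).trans ?_
  refine (Finset.sum_le_sum (fun i _ => h (τ i) i)).trans ?_
  simp

end

end Mah

namespace Mah
open MvPolynomial
noncomputable section

section wr
variable {σ : Type} [Fintype σ] {k : ℕ}

/-- vector of derivatives in the fraction field -/
def vv (φ : Fin k → MvPolynomial σ ℚ) (J : σ →₀ ℕ) : Fin k → FractionRing (MvPolynomial σ ℚ) :=
  fun l => algebraMap (MvPolynomial σ ℚ) (FractionRing (MvPolynomial σ ℚ)) (hd J (φ l))

/-- filtration by order -/
def SS (φ : Fin k → MvPolynomial σ ℚ) (d : ℕ) :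
    Submodule (FractionRing (MvPolynomial σ ℚ)) (Fin k → FractionRing (MvPolynomial σ ℚ)) :=
  Submodule.span _ (vv φ '' {J | J.degree < d})

lemma SS_mono (φ : Fin k → MvPolynomial σ ℚ) {d e : ℕ} (h : d ≤ e) : SS φ d ≤ SS φ e := by
  apply Submodule.span_mono
  apply Set.image_mono
  intro J hJ
  exact lt_of_lt_of_le hJ h

lemma vv_mem (φ : Fin k → MvPolynomial σ ℚ) {d : ℕ} {J : σ →₀ ℕ} (h : J.degree < d) :
    vv φ J ∈ SS φ d := Submodule.subset_span ⟨J, h, rfl⟩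

/-- pairing of a polynomial vector with `vv`. -/
lemma pair_eq (φ : Fin k → MvPolynomial σ ℚ) (c : Fin k → MvPolynomial σ ℚ) (J : σ →₀ ℕ) :
    ∑ l, algebraMap (MvPolynomial σ ℚ) (FractionRing (MvPolynomial σ ℚ)) (c l) * vv φ J l =
    algebraMap (MvPolynomial σ ℚ) (FractionRing (MvPolynomial σ ℚ)) (∑ l, c l * hd J (φ l)) := by
  simp [vv]

/-- linear functional from a polynomial vector -/
def ff (c : Fin k → MvPolynomial σ ℚ) :
    (Fin k → FractionRing (MvPolynomial σ ℚ)) →ₗ[FractionRing (MvPolynomial σ ℚ)]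
      FractionRing (MvPolynomial σ ℚ) :=
  ∑ l, (algebraMap (MvPolynomial σ ℚ) (FractionRing (MvPolynomial σ ℚ)) (c l)) •
    LinearMap.proj (R := FractionRing (MvPolynomial σ ℚ))
      (φ := fun _ : Fin k => FractionRing (MvPolynomial σ ℚ)) l

lemma ff_vv (φ c : Fin k → MvPolynomial σ ℚ) (J : σ →₀ ℕ) :
    ff c (vv φ J) = 0 ↔ ∑ l, c l * hd J (φ l) = 0 := by
  have : ff c (vv φ J) = ∑ l, algebraMap (MvPolynomial σ ℚ) (FractionRing (MvPolynomial σ ℚ)) (c l)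
      * vv φ J l := by simp [ff, Algebra.smul_def]
  rw [this, pair_eq]
  exact map_eq_zero_iff _ (IsFractionRing.injective _ _)

lemma clear (f : (Fin k → FractionRing (MvPolynomial σ ℚ)) →ₗ[FractionRing (MvPolynomial σ ℚ)]
      FractionRing (MvPolynomial σ ℚ)) :
    ∃ (b : FractionRing (MvPolynomial σ ℚ)) (c : Fin k → MvPolynomial σ ℚ), b ≠ 0 ∧
      ff c = b • f := by
  classical
  obtain ⟨b, hb⟩ := IsLocalization.exist_integer_multiples_of_finite
    (nonZeroDivisors (MvPolynomial σ ℚ)) (fun l : Fin k => f (Pi.single l 1))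
  choose c hc using hb
  refine ⟨algebraMap _ _ (b : MvPolynomial σ ℚ), c, ?_, ?_⟩
  · intro h
    exact nonZeroDivisors.ne_zero b.2 ((map_eq_zero_iff _ (IsFractionRing.injective _ _)).1 h)
  · apply LinearMap.pi_ext'
    intro l
    ext
    simp only [LinearMap.comp_apply, LinearMap.smul_apply, LinearMap.single_apply]
    have := hc l
    simp only [Algebra.smul_def] at this
    rw [smul_eq_mul, ← this]
    simp [ff, Pi.single_apply, Algebra.smul_def]

lemma stab (φ : Fin k → MvPolynomial σ ℚ) (d : ℕ) (h : SS φ (d + 1) ≤ SS φ d) (J : σ →₀ ℕ) :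
    vv φ J ∈ SS φ d := by
  classical
  induction hn : J.degree generalizing J with
  | zero => exact h (vv_mem φ (by omega))
  | succ e ih =>
    have hJ : J ≠ 0 := by rintro rfl; simp at hn
    obtain ⟨x, hx⟩ := Finsupp.ne_iff.1 hJ
    have hle : Finsupp.single x 1 ≤ J := by
      rw [Finsupp.single_le_iff]; exact Nat.one_le_iff_ne_zero.2 hx
    obtain ⟨J', rfl⟩ : ∃ J', J = J' + Finsupp.single x 1 := ⟨J - Finsupp.single x 1, by
      rw [tsub_add_cancel_of_le hle]⟩
    have hd' : J'.degree = e := by simpa using hn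
    have hJ' := ih J' hd'
    by_contra hnot
    obtain ⟨f, hf, hker⟩ := Submodule.exists_le_ker_of_notMem hnot
    obtain ⟨b, c, hb, hc⟩ := clear f
    have hS : ∀ v ∈ SS φ d, ff c v = 0 := by
      intro v hv
      rw [hc, LinearMap.smul_apply, LinearMap.mem_ker.1 (hker hv), smul_zero]
    have hderiv : ∀ I : σ →₀ ℕ, ∑ l, c l * hd I (φ l) = 0 →
        ∑ l, pderiv x (c l) * hd I (φ l) =
          - (((I x + 1 : ℕ) : ℚ) • ∑ l, c l * hd (I + Finsupp.single x 1) (φ l)) := by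
      intro I hI
      have := congrArg (pderiv x) hI
      rw [map_sum] at this
      simp only [Derivation.leibniz, pderiv_hd, smul_eq_mul, map_zero] at this
      rw [Finset.sum_add_distrib] at this
      rw [eq_neg_iff_add_eq_zero, ← this, add_comm, Finset.smul_sum]
      congr 1
      · apply Finset.sum_congr rfl
        intro l _
        rw [mul_smul_comm]
      · apply Finset.sum_congr rfl
        intro l _
        ring
    have hS' : SS φ d ≤ LinearMap.ker (ff fun l => pderiv x (c l)) := by
      apply Submodule.span_le.2
      rintro _ ⟨I, hI, rfl⟩
      simp only [SetLike.mem_coe, LinearMap.mem_ker]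
      rw [ff_vv]
      have h1 := (ff_vv φ c I).1 (hS _ (vv_mem φ hI))
      have h2 := (ff_vv φ c (I + Finsupp.single x 1)).1 (hS _ (h (vv_mem φ (by
        have : I.degree < d := hI
        simpa using this))))
      rw [hderiv I h1, h2, smul_zero, neg_zero]
    have h3 := hderiv J' ((ff_vv φ c J').1 (hS _ hJ'))
    rw [(ff_vv φ _ J').1 (LinearMap.mem_ker.1 (hS' hJ'))] at h3
    have h4 : ∑ l, c l * hd (J' + Finsupp.single x 1) (φ l) = 0 := by
      have hne : ((J' x + 1 : ℕ) : ℚ) ≠ 0 := by positivity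
      have := (neg_eq_zero.1 h3.symm)
      exact (smul_eq_zero.1 this).resolve_left hne
    have h5 := (ff_vv φ c _).2 h4
    rw [hc, LinearMap.smul_apply, smul_eq_mul] at h5
    exact (mul_ne_zero hb hf) h5

lemma all_mem (φ : Fin k → MvPolynomial σ ℚ) (J : σ →₀ ℕ) : vv φ J ∈ SS φ k := by
  by_cases h : ∃ d ≤ k, SS φ (d + 1) ≤ SS φ d
  · obtain ⟨d, hd, h⟩ := h
    exact SS_mono φ hd (stab φ d h J)
  · exfalso
    push Not at h
    have : ∀ d ≤ k + 1, d ≤ Module.finrank (FractionRing (MvPolynomial σ ℚ)) (SS φ d) := by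
      intro d
      induction d with
      | zero => intro _; exact Nat.zero_le _
      | succ d ih =>
        intro hd
        have h1 := ih (by omega)
        have h2 : SS φ d < SS φ (d + 1) :=
          lt_of_le_not_ge (SS_mono φ (Nat.le_succ d)) (h d (by omega))
        have := Submodule.finrank_lt_finrank_of_lt h2
        omega
    have h1 := this (k + 1) le_rfl
    have h2 := Submodule.finrank_le (SS φ (k + 1))
    rw [Module.finrank_fin_fun] at h2
    omega

lemma SS_top (φ : Fin k → MvPolynomial σ ℚ) (hφ : LinearIndependent ℚ φ) : SS φ k = ⊤ := by
  by_contra hne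
  obtain ⟨f, hf, hker⟩ := Submodule.exists_le_ker_of_lt_top _ (lt_top_iff_ne_top.2 hne)
  obtain ⟨b, c, hb, hc⟩ := clear f
  have h0 : ∀ J, ∑ l, c l * hd J (φ l) = 0 := by
    intro J
    rw [← ff_vv, hc, LinearMap.smul_apply, LinearMap.mem_ker.1 (hker (all_mem φ J)), smul_zero]
  have hc0 : ∀ l, c l = 0 := by
    intro l
    apply MvPolynomial.funext
    intro ξ
    rw [map_zero]
    have : ∑ l, eval ξ (c l) • φ l = 0 := by
      apply sh_injective ξ
      rw [map_zero, map_sum]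
      ext J
      have := congrArg (eval ξ) (h0 J)
      simp only [map_sum, map_mul, eval_hd, map_zero] at this
      simp only [map_smul, coeff_sum, coeff_smul, smul_eq_mul, coeff_zero]
      exact this
    exact Fintype.linearIndependent_iff.1 hφ _ this l
  have : ff c = 0 := by simp [ff, hc0]
  rw [hc] at this
  exact hf ((smul_eq_zero.1 this).resolve_left hb)

theorem wronskian (φ : Fin k → MvPolynomial σ ℚ) (hφ : LinearIndependent ℚ φ) :
    ∃ J : Fin k → σ →₀ ℕ, (∀ i, (J i).degree < k) ∧
      (Matrix.of fun i l => hd (J i) (φ l)).det ≠ 0 := by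
  classical
  obtain ⟨s, hs, hspan, hli⟩ := exists_linearIndependent (FractionRing (MvPolynomial σ ℚ))
    (vv φ '' {J | J.degree < k})
  have htop : Submodule.span (FractionRing (MvPolynomial σ ℚ)) s = ⊤ := by
    rw [hspan]; exact SS_top φ hφ
  let B := Module.Basis.mk hli (by rw [Subtype.range_coe, htop])
  have : Fintype s := FiniteDimensional.fintypeBasisIndex B
  have hcard : Fintype.card s = k := by
    rw [← Module.finrank_eq_card_basis B, Module.finrank_fin_fun]
  let e : Fin k ≃ s := (Fintype.equivFinOfCardEq hcard).symm
  have hex : ∀ i, ∃ J : σ →₀ ℕ, J.degree < k ∧ vv φ J = (e i : Fin k → _) := by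
    intro i
    obtain ⟨J, hJ, h⟩ := hs (e i).2
    exact ⟨J, hJ, h⟩
  choose J hJ hv using hex
  refine ⟨J, hJ, ?_⟩
  intro hdet
  have hli2 : LinearIndependent (FractionRing (MvPolynomial σ ℚ)) (fun i => vv φ (J i)) := by
    have := hli.comp e e.injective
    have hfun : (Subtype.val ∘ e : Fin k → _) = fun i => vv φ (J i) := by
      funext i
      exact (hv i).symm
    rw [hfun] at this
    exact this
  have hu := (Matrix.linearIndependent_rows_iff_isUnit
    (A := Matrix.of fun i => vv φ (J i))).1 hli2
  rw [Matrix.isUnit_iff_isUnit_det] at hu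
  apply hu.ne_zero
  have := congrArg (algebraMap (MvPolynomial σ ℚ) (FractionRing (MvPolynomial σ ℚ))) hdet
  rw [map_zero, RingHom.map_det] at this
  rw [← this]
  rfl

end wr
end
end Mah

namespace Mah
open MvPolynomial
noncomputable section

section mixs
variable {n : ℕ} {R : Type} [CommRing R]

/-- product of polynomials in separate variables -/
def mix (φ : MvPolynomial (Fin n) R) (ψ : MvPolynomial (Fin 1) R) : MvPolynomial (Fin (n + 1)) R :=
  rename Fin.succ φ * rename (fun _ => 0) ψ

lemma single_fin1 (b : Fin 1 →₀ ℕ) : Finsupp.single 0 (b 0) = b := by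
  ext
  simp

lemma exp_eq (a : Fin n →₀ ℕ) (b : Fin 1 →₀ ℕ) :
    Finsupp.mapDomain Fin.succ a + Finsupp.mapDomain (fun _ => (0 : Fin (n + 1))) b
      = Finsupp.cons (b 0) a := by
  ext x
  refine Fin.cases ?_ (fun x => ?_) x
  · rw [Finsupp.add_apply, Finsupp.cons_zero, ← single_fin1 b, Finsupp.mapDomain_single,
      Finsupp.mapDomain_of_notMem_range]
    · simp
    · rintro ⟨y, hy⟩
      exact Fin.succ_ne_zero y hy
  · rw [Finsupp.add_apply, Finsupp.cons_succ, Finsupp.mapDomain_apply (Fin.succ_injective n),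
      Finsupp.mapDomain_of_notMem_range]
    · simp
    · rintro ⟨y, hy⟩
      exact Fin.succ_ne_zero x hy.symm

lemma mix_monomial (a : Fin n →₀ ℕ) (b : Fin 1 →₀ ℕ) (c d : R) :
    mix (monomial a c) (monomial b d) = monomial (Finsupp.cons (b 0) a) (c * d) := by
  rw [mix, rename_monomial, rename_monomial, monomial_mul, exp_eq]

lemma cons_inj (i j : ℕ) (a b : Fin n →₀ ℕ) :
    Finsupp.cons i a = Finsupp.cons j b ↔ i = j ∧ a = b := by
  constructor
  · intro h
    refine ⟨?_, ?_⟩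
    · simpa using DFunLike.congr_fun h 0
    · ext x
      simpa using DFunLike.congr_fun h x.succ
  · rintro ⟨rfl, rfl⟩; rfl

lemma mix_add_left (a b : MvPolynomial (Fin n) R) (ψ : MvPolynomial (Fin 1) R) :
    mix (a + b) ψ = mix a ψ + mix b ψ := by simp [mix, add_mul]

lemma mix_add_right (a : MvPolynomial (Fin n) R) (ψ χ : MvPolynomial (Fin 1) R) :
    mix a (ψ + χ) = mix a ψ + mix a χ := by simp [mix, mul_add]

lemma coeff_mix (j : ℕ) (J : Fin n →₀ ℕ) (φ : MvPolynomial (Fin n) R)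
    (ψ : MvPolynomial (Fin 1) R) :
    coeff (Finsupp.cons j J) (mix φ ψ) = coeff J φ * coeff (Finsupp.single 0 j) ψ := by
  classical
  induction φ using MvPolynomial.induction_on' with
  | monomial a c =>
    induction ψ using MvPolynomial.induction_on' with
    | monomial b d =>
      rw [mix_monomial, coeff_monomial, coeff_monomial, coeff_monomial]
      have : b = Finsupp.single 0 j ↔ b 0 = j := by
        constructor
        · rintro rfl; simp
        · rintro rfl; exact (single_fin1 b).symm
      simp only [cons_inj, this]
      by_cases h1 : b 0 = j <;> by_cases h2 : a = J <;> simp [h1, h2]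
    | add p q hp hq => rw [mix_add_right, coeff_add, hp, hq, coeff_add, mul_add]
  | add p q hp hq => rw [mix_add_left, coeff_add, hp, hq, coeff_add, add_mul]

lemma ext_cons {P Q : MvPolynomial (Fin (n + 1)) R}
    (h : ∀ j J, coeff (Finsupp.cons j J) P = coeff (Finsupp.cons j J) Q) : P = Q := by
  ext K
  rw [← Finsupp.cons_tail K]
  exact h _ _

lemma cons_add (i j : ℕ) (a b : Fin n →₀ ℕ) :
    (Finsupp.cons i a : Fin (n + 1) →₀ ℕ) + Finsupp.cons j b = Finsupp.cons (i + j) (a + b) := by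
  ext x
  refine Fin.cases ?_ (fun x => ?_) x <;> simp

lemma bin_cons (i j : ℕ) (a b : Fin n →₀ ℕ) :
    bin (Finsupp.cons i a) (Finsupp.cons j b) = i.choose j * bin a b := by
  simp [bin, Fin.prod_univ_succ]

lemma hd_mix (j : ℕ) (J : Fin n →₀ ℕ) (φ : MvPolynomial (Fin n) R) (ψ : MvPolynomial (Fin 1) R) :
    hd (Finsupp.cons j J) (mix φ ψ) = mix (hd J φ) (hd (Finsupp.single 0 j) ψ) := by
  apply ext_cons
  intro i I
  rw [coeff_hd, coeff_mix, cons_add, coeff_mix, coeff_hd, coeff_hd, bin_cons,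
    ← Finsupp.single_add]
  have : bin (Finsupp.single 0 (i + j) : Fin 1 →₀ ℕ) (Finsupp.single 0 j) = (i + j).choose j := by
    simp [bin]
  rw [this]
  push_cast; ring

lemma sh_rename {m : ℕ} (f : Fin m → Fin n) (ξ : Fin n → R) (φ : MvPolynomial (Fin m) R) :
    sh ξ (rename f φ) = rename f (sh (ξ ∘ f) φ) := by
  have : (sh ξ).comp (rename f) = (rename f).comp (sh (ξ ∘ f)) := by
    apply algHom_ext
    intro h
    simp [sh]
  exact DFunLike.congr_fun this φ

lemma sh_mix (ξ : Fin (n + 1) → R) (φ : MvPolynomial (Fin n) R) (ψ : MvPolynomial (Fin 1) R) :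
    sh ξ (mix φ ψ) = mix (sh (ξ ∘ Fin.succ) φ) (sh (fun _ => ξ 0) ψ) := by
  rw [mix, map_mul, sh_rename, sh_rename]
  rfl

lemma wt_cons (w : Fin (n + 1) → ℝ) (j : ℕ) (J : Fin n →₀ ℕ) :
    wt w (Finsupp.cons j J) = j * w 0 + wt (w ∘ Fin.succ) J := by
  simp [wt, Fin.sum_univ_succ]

/-- the slice of P at `X_0 ^ j` -/
def slice (j : ℕ) (P : MvPolynomial (Fin (n + 1)) R) : MvPolynomial (Fin n) R :=
  (MvPolynomial.finSuccEquiv R n P).coeff j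

lemma coeff_slice (j : ℕ) (J : Fin n →₀ ℕ) (P : MvPolynomial (Fin (n + 1)) R) :
    coeff J (slice j P) = coeff (Finsupp.cons j J) P := finSuccEquiv_coeff_coeff _ _ _

lemma degreeOf_slice (j : ℕ) (P : MvPolynomial (Fin (n + 1)) R) (x : Fin n) :
    degreeOf x (slice j P) ≤ degreeOf x.succ P := by
  rw [degreeOf_le_iff]
  intro K hK
  rw [mem_support_iff, coeff_slice] at hK
  have := degreeOf_le_iff.1 (le_refl (degreeOf x.succ P)) _ (mem_support_iff.2 hK)
  simpa using this

lemma N_slice (j : ℕ) (P : MvPolynomial (Fin (n + 1)) ℤ) : N (slice j P) ≤ N P := by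
  classical
  have hinj : Function.Injective (fun J : Fin n →₀ ℕ => (Finsupp.cons j J : Fin (n + 1) →₀ ℕ)) :=
    fun a b h => ((cons_inj _ _ _ _).1 h).2
  rw [N, N]
  have : ∑ i ∈ (slice j P).support, (coeff i (slice j P)).natAbs =
      ∑ i ∈ (slice j P).support.image
        (fun J : Fin n →₀ ℕ => (Finsupp.cons j J : Fin (n + 1) →₀ ℕ)), (coeff i P).natAbs := by
    rw [Finset.sum_image (fun a _ b _ h => hinj h)]
    simp only [coeff_slice]
  rw [this]
  apply Finset.sum_le_sum_of_subset
  intro K hK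
  obtain ⟨J, hJ, rfl⟩ := Finset.mem_image.1 hK
  rw [mem_support_iff, coeff_slice] at hJ
  exact mem_support_iff.2 hJ

lemma coeff_eq_zero_of_degree {P : MvPolynomial (Fin (n + 1)) R} {r j : ℕ}
    (h : degreeOf 0 P ≤ r) (hj : r < j) (J : Fin n →₀ ℕ) : coeff (Finsupp.cons j J) P = 0 := by
  by_contra hne
  have := degreeOf_le_iff.1 h _ (mem_support_iff.2 hne)
  simp at this
  omega

lemma coeff_fin1_sum (s : Finset ℕ) (g : ℕ → R) (j : ℕ) :
    coeff (Finsupp.single 0 j) (∑ i ∈ s, (monomial (Finsupp.single (0 : Fin 1) i) (g i))) =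
      if j ∈ s then g j else 0 := by
  classical
  rw [coeff_sum]
  simp only [coeff_monomial]
  have : ∀ i, (Finsupp.single (0 : Fin 1) i = Finsupp.single 0 j) ↔ i = j := by
    intro i
    exact (Finsupp.single_injective (0 : Fin 1)).eq_iff
  simp [this]

lemma decomp (P : MvPolynomial (Fin (n + 1)) ℚ) (r : ℕ) (hr : degreeOf 0 P ≤ r) (hP : P ≠ 0) :
    ∃ (k : ℕ) (φ : Fin k → MvPolynomial (Fin n) ℚ) (ψ : Fin k → MvPolynomial (Fin 1) ℚ),
      0 < k ∧ k ≤ r + 1 ∧ LinearIndependent ℚ φ ∧ LinearIndependent ℚ ψ ∧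
      P = ∑ l, mix (φ l) (ψ l) := by
  classical
  let V : Submodule ℚ (MvPolynomial (Fin n) ℚ) :=
    Submodule.span ℚ (Set.range fun j : Fin (r + 1) => slice j P)
  have hV : ∀ j : ℕ, slice j P ∈ V := by
    intro j
    by_cases hj : j < r + 1
    · exact Submodule.subset_span ⟨⟨j, hj⟩, rfl⟩
    · have : slice j P = 0 := by
        ext J
        rw [coeff_slice, coeff_eq_zero_of_degree hr (by omega), coeff_zero]
      rw [this]; exact V.zero_mem
  have : FiniteDimensional ℚ V := FiniteDimensional.span_of_finite ℚ (Set.finite_range _)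
  let k := Module.finrank ℚ V
  let b : Module.Basis (Fin k) ℚ V := Module.finBasis ℚ V
  let φ : Fin k → MvPolynomial (Fin n) ℚ := fun l => (b l : MvPolynomial (Fin n) ℚ)
  let g : Fin k → ℕ → ℚ := fun l j => b.repr ⟨slice j P, hV j⟩ l
  let ψ : Fin k → MvPolynomial (Fin 1) ℚ := fun l =>
    ∑ j ∈ Finset.range (r + 1), monomial (Finsupp.single 0 j) (g l j)
  have hψ : ∀ l j, coeff (Finsupp.single 0 j) (ψ l) = g l j := by
    intro l j
    rw [coeff_fin1_sum]
    split_ifs with h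
    · rfl
    · have : (⟨slice j P, hV j⟩ : V) = 0 := by
        apply Subtype.ext
        ext J
        rw [coeff_slice, coeff_eq_zero_of_degree hr (by simpa using h)]; simp
      simp [g, this]
  have heq : P = ∑ l, mix (φ l) (ψ l) := by
    apply ext_cons
    intro j J
    rw [coeff_sum]
    simp only [coeff_mix, hψ]
    rw [← coeff_slice]
    have h1 := b.sum_repr ⟨slice j P, hV j⟩
    have h2 := congrArg (fun v : V => coeff J (v : MvPolynomial (Fin n) ℚ)) h1
    simp only [Submodule.coe_sum, Submodule.coe_smul, coeff_sum, coeff_smul, smul_eq_mul] at h2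
    rw [← h2]
    apply Finset.sum_congr rfl
    intro l _
    ring
  refine ⟨k, φ, ψ, ?_, ?_, ?_, ?_, heq⟩
  · rcases Nat.eq_zero_or_pos k with h | h
    · exfalso
      apply hP
      rw [heq]
      have : IsEmpty (Fin k) := by rw [h]; infer_instance
      simp
    · exact h
  · have := finrank_range_le_card (R := ℚ) (fun j : Fin (r + 1) => slice j P)
    rw [Fintype.card_fin] at this
    exact this
  · exact b.linearIndependent.map' V.subtype (by simp)
  · rw [Fintype.linearIndependent_iff]
    intro c hc
    have h1 : ∀ j, ∑ l, c l * g l j = 0 := by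
      intro j
      have := congrArg (coeff (Finsupp.single 0 j)) hc
      simpa [coeff_sum, hψ] using this
    let L : V →ₗ[ℚ] ℚ := b.constr ℚ c
    have hL : ∀ v : V, L v = ∑ l, b.repr v l * c l := by
      intro v
      simp [L, Module.Basis.constr_apply_fintype]
    have h2 : ∀ j, L ⟨slice j P, hV j⟩ = 0 := by
      intro j
      rw [hL, ← h1 j]
      apply Finset.sum_congr rfl
      intro l _
      simp [g, mul_comm]
    have h3 : ∀ v (hv : v ∈ V), L ⟨v, hv⟩ = 0 := by
      intro v hv
      induction hv using Submodule.span_induction with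
      | mem x hx =>
        obtain ⟨j, rfl⟩ := hx
        exact h2 j
      | zero => exact L.map_zero
      | add x y hx hy h1 h2 =>
        have := L.map_add ⟨x, hx⟩ ⟨y, hy⟩
        rw [h1, h2, add_zero] at this
        exact this
      | smul a x hx h =>
        have := L.map_smul a ⟨x, hx⟩
        rw [h, smul_zero] at this
        exact this
    intro l
    have := h3 (b l) (b l).2
    rw [← this]
    simp [L]

/-- One variable estimate. -/
lemma onevar (U : MvPolynomial (Fin 1) ℚ) (hU : U ≠ 0) (p : Polynomial ℤ) (v : ℚ) (hv : v ≠ 0)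
    (hp : ∀ j, (p.coeff j : ℚ) = v * coeff (Finsupp.single 0 j) U) (ξ : ℚ) (B : ℕ)
    (hB : ∀ j, (p.coeff j).natAbs ≤ B) :
    ∃ l : ℕ, coeff (Finsupp.single 0 l) (sh (fun _ => ξ) U) ≠ 0 ∧ ξ.den ^ l ≤ B := by
  classical
  set Q := sh (fun _ => ξ) U with hQ
  have hQ0 : Q ≠ 0 := by
    intro h
    apply hU
    apply sh_injective (fun _ => ξ)
    rw [map_zero, ← h]
  have hex : ∃ l, coeff (Finsupp.single 0 l) Q ≠ 0 := by
    obtain ⟨K, hK⟩ := MvPolynomial.exists_coeff_ne_zero hQ0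
    exact ⟨K 0, by rwa [single_fin1]⟩
  refine ⟨Nat.find hex, Nat.find_spec hex, ?_⟩
  set l := Nat.find hex
  let T : MvPolynomial (Fin 1) ℚ →ₐ[ℚ] Polynomial ℚ := aeval (fun _ => Polynomial.X)
  have hT : ∀ (V : MvPolynomial (Fin 1) ℚ) j, (T V).coeff j = coeff (Finsupp.single 0 j) V := by
    intro V j
    induction V using MvPolynomial.induction_on' with
    | monomial a c =>
      have : T (monomial a c) = Polynomial.monomial (a 0) c := by
        simp [T, aeval_monomial, Polynomial.C_mul_X_pow_eq_monomial]
      rw [this, Polynomial.coeff_monomial, coeff_monomial]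
      have : a = Finsupp.single 0 j ↔ a 0 = j := by
        constructor
        · rintro rfl; simp
        · rintro rfl; exact (single_fin1 a).symm
      simp [this]
    | add p q hp hq => rw [map_add, Polynomial.coeff_add, hp, hq, coeff_add]
  have hmap : p.map (Int.castRingHom ℚ) = Polynomial.C v * T U := by
    ext j
    simp [hp, hT]
  have hp0 : p ≠ 0 := by
    rintro rfl
    rw [Polynomial.map_zero] at hmap
    have : T U = 0 := by
      have := hmap.symm
      rw [mul_eq_zero] at this
      exact this.resolve_left (by simpa using hv)
    apply hU
    ext K
    rw [← single_fin1 K, ← hT, this]; simp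
  have hdiv : (Polynomial.X - Polynomial.C ξ) ^ l ∣ T U := by
    have e : T U = aeval (fun _ => Polynomial.X - Polynomial.C ξ) Q := by
      have : T = (aeval (fun _ => Polynomial.X - Polynomial.C ξ)).comp (sh (fun _ => ξ)) := by
        apply algHom_ext
        intro i
        simp [T, sh, Polynomial.algebraMap_eq]
      rw [this]; rfl
    rw [e]
    conv_rhs => rw [Q.as_sum]
    rw [map_sum]
    apply Finset.dvd_sum
    intro K hK
    rw [aeval_monomial]
    apply Dvd.dvd.mul_left
    have h1 : l ≤ K 0 := by
      apply Nat.find_min'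
      rw [single_fin1]
      exact mem_support_iff.1 hK
    simp only [Finsupp.prod_fintype, pow_zero, implies_true, Finset.univ_unique,
      Finset.prod_singleton]
    exact pow_dvd_pow _ h1
  let q : Polynomial ℤ := Polynomial.C (ξ.den : ℤ) * Polynomial.X + Polynomial.C (-ξ.num)
  have hqp : q.IsPrimitive := by
    rw [Polynomial.isPrimitive_iff_isUnit_of_C_dvd]
    intro a ha
    rw [Polynomial.C_dvd_iff_dvd_coeff] at ha
    have h0 := ha 0
    have h1 := ha 1
    have e0 : q.coeff 0 = -ξ.num := by
      rw [Polynomial.coeff_add, Polynomial.coeff_C_mul, Polynomial.coeff_X_zero,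
        Polynomial.coeff_C_zero]; ring
    have e1 : q.coeff 1 = ξ.den := by
      rw [Polynomial.coeff_add, Polynomial.coeff_C_mul, Polynomial.coeff_X_one,
        Polynomial.coeff_C_succ]; ring
    rw [e0, dvd_neg] at h0
    rw [e1] at h1
    have hc := ξ.isCoprime_num_den
    exact hc.isUnit_of_dvd' h0 h1
  have hqmap : q.map (Int.castRingHom ℚ) =
      Polynomial.C (ξ.den : ℚ) * (Polynomial.X - Polynomial.C ξ) := by
    simp only [q, Polynomial.map_add, Polynomial.map_mul, Polynomial.map_C, Polynomial.map_X, mul_sub,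
      ← Polynomial.C_mul, Rat.den_mul_eq_num]
    simp [sub_eq_add_neg]
  have hqpl : ∀ e : ℕ, (q ^ e).IsPrimitive := by
    intro e
    induction e with
    | zero => rw [pow_zero]; exact Polynomial.isPrimitive_one
    | succ e ih => rw [pow_succ]; exact ih.mul hqp
  have hql : q ^ l ∣ p := by
    rw [Polynomial.IsPrimitive.Int.dvd_iff_map_cast_dvd_map_cast _ _ (hqpl l), hmap,
      Polynomial.map_pow, hqmap, mul_pow]
    apply Dvd.dvd.mul_left
    have hu : IsUnit (Polynomial.C (ξ.den : ℚ) ^ l) := by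
      apply IsUnit.pow
      rw [Polynomial.isUnit_C, isUnit_iff_ne_zero]
      exact_mod_cast ξ.den_nz
    exact (hu.mul_left_dvd).2 hdiv
  have hlc := Polynomial.leadingCoeff_dvd_leadingCoeff hql
  rw [Polynomial.leadingCoeff_pow] at hlc
  have hq : q.leadingCoeff = (ξ.den : ℤ) :=
    Polynomial.leadingCoeff_linear (by exact_mod_cast ξ.den_nz)
  rw [hq] at hlc
  have h4 := Int.natAbs_dvd_natAbs.2 hlc
  rw [Int.natAbs_pow, Int.natAbs_natCast] at h4
  refine (Nat.le_of_dvd ?_ h4).trans (hB p.natDegree)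
  exact Int.natAbs_pos.2 (Polynomial.leadingCoeff_ne_zero.2 hp0)

end mixs
end
end Mah

namespace Mah
open MvPolynomial
noncomputable section

section roths

lemma sumbound (r k : ℕ) (hr : 0 < r) (hk : k ≤ r + 1) (s : ℝ) (hs : 0 < s) (hs1 : s ≤ 1) :
    k * (s ^ 2 / 8) ≤ ∑ j ∈ Finset.range k, max 0 (s - j * (1 / (r : ℝ))) := by
  have hr' : (1 : ℝ) ≤ r := by exact_mod_cast hr
  have hk' : (k : ℝ) ≤ r + 1 := by exact_mod_cast hk
  let T := min k (⌊s * r / 2⌋₊ + 1)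
  have h1 : ∑ j ∈ Finset.range T, max 0 (s - j * (1 / (r : ℝ))) ≤
      ∑ j ∈ Finset.range k, max 0 (s - j * (1 / (r : ℝ))) := by
    apply Finset.sum_le_sum_of_subset_of_nonneg
    · exact Finset.range_mono (min_le_left _ _)
    · intro i _ _; exact le_max_left _ _
  have h2 : (T : ℝ) * (s / 2) ≤ ∑ j ∈ Finset.range T, max 0 (s - j * (1 / (r : ℝ))) := by
    have : ∀ j ∈ Finset.range T, s / 2 ≤ max 0 (s - j * (1 / (r : ℝ))) := by
      intro j hj
      refine le_trans ?_ (le_max_right _ _)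
      have hj1 : j ≤ ⌊s * r / 2⌋₊ := by
        have := lt_of_lt_of_le (Finset.mem_range.1 hj) (min_le_right _ _)
        omega
      have hj2 : (j : ℝ) ≤ s * r / 2 :=
        (Nat.cast_le.2 hj1).trans (Nat.floor_le (by positivity))
      have : (j : ℝ) * (1 / r) ≤ s / 2 := by
        rw [mul_one_div, div_le_iff₀ (by positivity)]
        linarith
      linarith
    have := Finset.card_nsmul_le_sum _ _ _ this
    simpa using this
  have h3 : (k : ℝ) * (s / 4) ≤ T := by
    have hT : (T : ℝ) = min (k : ℝ) (⌊s * r / 2⌋₊ + 1) := by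
      simp [T]
    rw [hT, le_min_iff]
    constructor
    · have : (0 : ℝ) ≤ k := Nat.cast_nonneg _
      nlinarith
    · have := Nat.lt_floor_add_one (s * r / 2)
      nlinarith
  have h4 : (k : ℝ) * (s / 4) * (s / 2) ≤ T * (s / 2) :=
    mul_le_mul_of_nonneg_right h3 (by positivity)
  calc (k : ℝ) * (s ^ 2 / 8) = (k : ℝ) * (s / 4) * (s / 2) := by ring
    _ ≤ _ := h4.trans (h2.trans h1)

lemma coeff_le_N {σ : Type} [Fintype σ] (P : MvPolynomial σ ℤ) (K : σ →₀ ℕ) :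
    (coeff K P).natAbs ≤ N P := by
  by_cases h : K ∈ P.support
  · exact Finset.single_le_sum (f := fun i => (coeff i P).natAbs) (fun _ _ => Nat.zero_le _) h
  · have : coeff K P = 0 := by simpa using h
    simp [this]

lemma N_pos {σ : Type} [Fintype σ] (P : MvPolynomial σ ℤ) (h : P ≠ 0) : 0 < N P := by
  obtain ⟨K, hK⟩ := MvPolynomial.exists_coeff_ne_zero h
  exact lt_of_lt_of_le (Int.natAbs_pos.2 hK) (coeff_le_N P K)

/-- The Wronskian package. -/
lemma wpack {n : ℕ} (r : Fin (n + 1) → ℕ) (P : MvPolynomial (Fin (n + 1)) ℤ) (hP : P ≠ 0)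
    (hdeg : ∀ h, degreeOf h P ≤ r h) :
    ∃ (k : ℕ) (J : Fin k → Fin n →₀ ℕ) (e : Fin k → ℕ) (V : MvPolynomial (Fin n) ℚ)
      (U : MvPolynomial (Fin 1) ℚ), 0 < k ∧ k ≤ r 0 + 1 ∧ (∀ i, (J i).degree < k) ∧
      (∀ i, e i < k) ∧ Function.Injective e ∧ V ≠ 0 ∧ U ≠ 0 ∧
      map (Int.castRingHom ℚ) (Matrix.of fun i j => hd (Finsupp.cons (e j) (J i)) P).det
        = mix V U := by
  classical
  set P' := map (Int.castRingHom ℚ) P with hP'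
  have hP0 : P' ≠ 0 := by
    intro h
    apply hP
    exact map_injective _ (Int.castRingHom ℚ).injective_int (by rw [← hP', h, map_zero])
  have hdeg0 : degreeOf 0 P' ≤ r 0 := by
    rw [degreeOf_le_iff]
    intro K hK
    refine degreeOf_le_iff.1 (hdeg 0) K ?_
    rw [mem_support_iff] at hK ⊢
    intro h
    apply hK
    rw [hP', coeff_map, h, map_zero]
  obtain ⟨k, φ, ψ, hk0, hk, hφ, hψ, heq⟩ := decomp P' (r 0) hdeg0 hP0
  obtain ⟨J, hJ, hV⟩ := wronskian φ hφ
  obtain ⟨E, hE, hU⟩ := wronskian ψ hψ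
  refine ⟨k, J, fun j => E j 0, _, _, hk0, hk, hJ, ?_, ?_, hV, hU, ?_⟩
  · intro i
    have := hE i
    rw [Finsupp.degree_eq_sum] at this
    simpa using this
  · intro i j hij
    by_contra hne
    apply hU
    apply Matrix.det_zero_of_row_eq hne
    have : E i = E j := by
      rw [← single_fin1 (E i), ← single_fin1 (E j)]
      simp only at hij
      rw [hij]
    funext l
    simp [this]
  · rw [RingHom.map_det, mix]
    have e1 : rename Fin.succ (Matrix.of fun i l => hd (J i) (φ l)).det =
        (Matrix.of fun i l => (rename Fin.succ (hd (J i) (φ l)) :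
          MvPolynomial (Fin (n + 1)) ℚ)).det := by
      rw [AlgHom.map_det]; rfl
    have e2 : rename (fun _ => (0 : Fin (n + 1))) (Matrix.of fun i l => hd (E i) (ψ l)).det =
        (Matrix.of fun i l => (rename (fun _ => (0 : Fin (n + 1))) (hd (E i) (ψ l)) :
          MvPolynomial (Fin (n + 1)) ℚ)).det := by
      rw [AlgHom.map_det]; rfl
    rw [e1, e2, ← Matrix.det_transpose (Matrix.of fun i l =>
      (rename (fun _ => (0 : Fin (n + 1))) (hd (E i) (ψ l)) : MvPolynomial (Fin (n + 1)) ℚ)),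
      ← Matrix.det_mul]
    congr 1
    ext1 i j
    simp only [RingHom.mapMatrix_apply, Matrix.map_apply, Matrix.of_apply, Matrix.mul_apply,
      Matrix.transpose_apply]
    rw [map_hd, ← hP', heq, map_sum]
    apply Finset.sum_congr rfl
    intro l _
    rw [hd_mix, single_fin1]
    rfl

theorem roth (n : ℕ) : ∀ η : ℝ, 0 < η → η ≤ 1 → ∃ ω : ℝ, 0 < ω ∧
    ∀ (r : Fin n → ℕ) (ξ : Fin n → ℚ) (P : MvPolynomial (Fin n) ℤ), P ≠ 0 →
      (∀ h, 0 < r h) → (∀ i j, i < j → (r i : ℝ) ≤ ω * r j) → (∀ h, degreeOf h P ≤ r h) →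
      (∀ h, Real.log (N P) + 2 * n * (∑ x, (r x : ℝ)) ≤ ω * r h * Real.log (ξ h).den) →
      ∃ J, wt (fun h => 1 / (r h : ℝ)) J ≤ η ∧
        coeff J (sh ξ (map (Int.castRingHom ℚ) P)) ≠ 0 := by
  classical
  induction n with
  | zero =>
    intro η h0 h1
    refine ⟨1, one_pos, ?_⟩
    intro r ξ P hP _ _ _ _
    have h2 : sh ξ (map (Int.castRingHom ℚ) P) ≠ 0 := by
      intro h
      apply hP
      apply map_injective _ (Int.castRingHom ℚ).injective_int
      apply sh_injective ξ
      simp [h]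
    obtain ⟨K, hK⟩ := MvPolynomial.exists_coeff_ne_zero h2
    refine ⟨K, ?_, hK⟩
    simp [wt, h0.le]
  | succ n ih =>
    intro η h0 h1
    obtain ⟨ω', hω', ih⟩ := ih (η ^ 2 / 64) (by positivity) (by nlinarith)
    refine ⟨min ω' (η ^ 2 / 64), lt_min hω' (by positivity), ?_⟩
    set ω := min ω' (η ^ 2 / 64) with hω
    have hω0 : 0 < ω := lt_min hω' (by positivity)
    have hω1 : ω ≤ η ^ 2 / 64 := min_le_right _ _
    have hω2 : ω ≤ ω' := min_le_left _ _
    intro r ξ P hP hr hrat hdeg hht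
    by_contra hcon
    push Not at hcon
    set w : Fin (n + 1) → ℝ := fun h => 1 / (r h : ℝ) with hw
    have hw0 : ∀ h, 0 ≤ w h := fun h => by positivity
    set P' := map (Int.castRingHom ℚ) P with hP'
    have hGe : Ge w η (sh ξ P') := by
      intro K hK
      by_contra hlt
      exact hK (hcon K (not_le.1 hlt).le)
    obtain ⟨k, J, e, V, U, hk0, hk, hJ, he, hinj, hV, hU, hW⟩ := wpack r P hP hdeg
    set W₀ := (Matrix.of fun i j => hd (Finsupp.cons (e j) (J i)) P).det with hW₀
    have hk0' : (0 : ℝ) < k := by exact_mod_cast hk0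
    have hr0 : (0 : ℝ) < r 0 := by exact_mod_cast hr 0
    -- lower bound
    have hlow : Ge w (k * ((η - ω) ^ 2 / 8)) (sh ξ (mix V U)) := by
      have hmat : sh ξ (mix V U) = (Matrix.of fun i j =>
          hd (Finsupp.cons (e j) (J i)) (sh ξ P')).det := by
        rw [← hW, RingHom.map_det, AlgHom.map_det]
        congr 1
        ext1 i j
        simp only [RingHom.mapMatrix_apply, AlgHom.mapMatrix_apply, Matrix.map_apply,
          Matrix.of_apply]
        rw [map_hd, hd_sh]
      have hdet : Ge w (∑ j, max 0 ((η - ω) - e j * w 0)) (sh ξ (mix V U)) := by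
        rw [hmat]
        apply Ge.det
        intro i j
        intro K hK
        rw [max_le_iff]
        refine ⟨wt_nonneg hw0 K, ?_⟩
        have h2 := hGe.hd (Finsupp.cons (e j) (J i)) K hK
        rw [wt_cons] at h2
        have h3 : wt (w ∘ Fin.succ) (J i) ≤ ω := by
          have h4 : ∀ x : Fin n, w x.succ ≤ ω / r 0 := by
            intro x
            have h5 := hrat 0 x.succ (Fin.succ_pos x)
            have h6 : (0 : ℝ) < r x.succ := by exact_mod_cast hr x.succ
            simp only [hw]
            rw [div_le_div_iff₀ h6 hr0]
            linarith
          have h7 : wt (w ∘ Fin.succ) (J i) ≤ ((J i).degree : ℝ) * (ω / r 0) := by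
            rw [Finsupp.degree_eq_sum, wt]
            push_cast
            rw [Finset.sum_mul]
            apply Finset.sum_le_sum
            intro x _
            exact mul_le_mul_of_nonneg_left (h4 x) (Nat.cast_nonneg _)
          have h8 : ((J i).degree : ℝ) ≤ r 0 := by
            have := hJ i
            exact_mod_cast (by omega : (J i).degree ≤ r 0)
          have h9 : ((J i).degree : ℝ) * (ω / r 0) ≤ r 0 * (ω / r 0) :=
            mul_le_mul_of_nonneg_right h8 (by positivity)
          have h10 : (r 0 : ℝ) * (ω / r 0) = ω := by field_simp
          linarith
        linarith
      have hsum : ∑ j, max 0 ((η - ω) - e j * w 0) =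
          ∑ j ∈ Finset.range k, max 0 ((η - ω) - j * (1 / (r 0 : ℝ))) := by
        rw [Finset.sum_range]
        let e' : Fin k → Fin k := fun i => ⟨e i, he i⟩
        have he' : Function.Bijective e' := by
          apply Finite.injective_iff_bijective.1
          intro a b hab
          exact hinj (Fin.ext_iff.1 hab)
        exact Function.Bijective.sum_comp he'
          (fun j : Fin k => max 0 ((η - ω) - (j : ℕ) * (1 / (r 0 : ℝ))))
      have hb := sumbound (r 0) k (hr 0) hk (η - ω) (by nlinarith) (by linarith)
      intro K hK
      have := hdet K hK
      rw [hsum] at this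
      linarith
    -- sizes
    set S : ℕ := ∑ x, r x with hS
    have hSr : ((S : ℕ) : ℝ) = ∑ x, (r x : ℝ) := by simp [hS]
    have hr0S : r 0 ≤ S := Finset.single_le_sum (f := r) (fun _ _ => Nat.zero_le _)
      (Finset.mem_univ 0)
    have hW0 : W₀ ≠ 0 := by
      intro h
      rw [h, map_zero] at hW
      obtain ⟨J0, hJ0⟩ := MvPolynomial.exists_coeff_ne_zero hV
      obtain ⟨u, hu⟩ := MvPolynomial.exists_coeff_ne_zero hU
      have := congrArg (coeff (Finsupp.cons (u 0) J0)) hW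
      rw [coeff_mix, single_fin1, coeff_zero] at this
      exact mul_ne_zero hJ0 hu this.symm
    have hNW : N W₀ ≤ (2 ^ S * (2 ^ S * N P)) ^ k := by
      have h2 : N W₀ ≤ k.factorial * (2 ^ S * N P) ^ k :=
        N_det _ _ (fun i j => N_hd r _ P hdeg)
      refine h2.trans ?_
      rw [mul_pow (2 ^ S) (2 ^ S * N P)]
      apply Nat.mul_le_mul _ le_rfl
      refine (Nat.factorial_le_pow k).trans (Nat.pow_le_pow_left ?_ k)
      have h3 : r 0 + 1 ≤ 2 ^ r 0 := Nat.lt_two_pow_self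
      have h4 : 2 ^ r 0 ≤ 2 ^ S := Nat.pow_le_pow_right (by norm_num) hr0S
      omega
    have hNPpos : (0 : ℝ) < N P := by exact_mod_cast N_pos P hP
    have hNWpos : (0 : ℝ) < N W₀ := by exact_mod_cast N_pos W₀ hW0
    have hlogW : Real.log (N W₀) ≤ k * (Real.log (N P) + 2 * S) := by
      have h2 : (N W₀ : ℝ) ≤ (2 ^ S * (2 ^ S * N P)) ^ k := by exact_mod_cast hNW
      have h3 := Real.log_le_log hNWpos h2
      rw [Real.log_pow, Real.log_mul (by positivity) (by positivity),
        Real.log_mul (by positivity) (by positivity), Real.log_pow] at h3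
      refine h3.trans (mul_le_mul_of_nonneg_left ?_ hk0'.le)
      have h4 : Real.log 2 ≤ 1 := by linarith [Real.log_two_lt_d9]
      have h5 : (0 : ℝ) ≤ S := Nat.cast_nonneg _
      nlinarith
    obtain ⟨J0, hJ0⟩ := MvPolynomial.exists_coeff_ne_zero hV
    obtain ⟨u, hu⟩ := MvPolynomial.exists_coeff_ne_zero hU
    have hcoefW : ∀ j I, ((coeff (Finsupp.cons j I) W₀ : ℤ) : ℚ) =
        coeff I V * coeff (Finsupp.single 0 j) U := by
      intro j I
      rw [← coeff_mix, ← hW, coeff_map]; rfl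
    have hdegW : ∀ h, degreeOf h W₀ ≤ k * r h := by
      intro h
      apply degreeOf_det
      intro i j
      exact (degreeOf_hd _ _ _).trans (hdeg h)
    have hS0 : (0 : ℝ) ≤ S := Nat.cast_nonneg _
    -- V part
    have hVpart : ∃ J1, wt (w ∘ Fin.succ) J1 ≤ k * (η ^ 2 / 64) ∧
        coeff J1 (sh (ξ ∘ Fin.succ) V) ≠ 0 := by
      set V' := slice (u 0) W₀ with hV'
      have hmapV : map (Int.castRingHom ℚ) V' = coeff u U • V := by
        ext I
        rw [coeff_map, hV', coeff_slice, coeff_smul, smul_eq_mul, mul_comm]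
        have := hcoefW (u 0) I
        rw [single_fin1] at this
        exact this
      have hV'0 : V' ≠ 0 := by
        intro h
        rw [h, map_zero] at hmapV
        exact (smul_ne_zero hu hV) hmapV.symm
      have hNV' : Real.log (N V') ≤ Real.log (N W₀) := by
        apply Real.log_le_log
        · exact_mod_cast N_pos V' hV'0
        · exact_mod_cast N_slice (u 0) W₀
      obtain ⟨J1, hJ1, hne⟩ := ih (fun x => k * r x.succ) (ξ ∘ Fin.succ) V' hV'0
        (fun x => Nat.mul_pos hk0 (hr _))
        (by
          intro i j hij
          have h2 := hrat i.succ j.succ (Fin.succ_lt_succ_iff.2 hij)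
          have h3 : (0 : ℝ) ≤ r j.succ := Nat.cast_nonneg _
          push_cast
          have h4 : (r i.succ : ℝ) ≤ ω' * r j.succ :=
            h2.trans (mul_le_mul_of_nonneg_right hω2 h3)
          nlinarith)
        (fun x => (degreeOf_slice _ _ _).trans (hdegW _))
        (by
          intro x
          have h2 := hht x.succ
          rw [← hSr] at h2
          have h3 : ∑ y : Fin n, ((k * r y.succ : ℕ) : ℝ) ≤ k * S := by
            push_cast
            rw [← Finset.mul_sum, hSr, Fin.sum_univ_succ]
            apply mul_le_mul_of_nonneg_left _ hk0'.le
            linarith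
          have h4 : 0 ≤ Real.log ((ξ x.succ).den) := Real.log_natCast_nonneg _
          have h5 : ω * r x.succ * Real.log ((ξ x.succ).den) ≤
              ω' * r x.succ * Real.log ((ξ x.succ).den) := by
            apply mul_le_mul_of_nonneg_right _ h4
            exact mul_le_mul_of_nonneg_right hω2 (Nat.cast_nonneg _)
          have h6 : (2 : ℝ) * n * ∑ y : Fin n, ((k * r y.succ : ℕ) : ℝ) ≤ 2 * n * (k * S) :=
            mul_le_mul_of_nonneg_left h3 (by positivity)
          push_cast at h2 h6 ⊢
          have h7 := mul_le_mul_of_nonneg_left (h2.trans h5) hk0'.le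
          simp only [Function.comp]
          linarith)
      refine ⟨J1, ?_, ?_⟩
      · have e1 : wt (w ∘ Fin.succ) J1 =
            k * wt (fun h : Fin n => 1 / (((k * r h.succ : ℕ)) : ℝ)) J1 := by
          simp only [wt, Finset.mul_sum]
          apply Finset.sum_congr rfl
          intro x _
          have : (r x.succ : ℝ) ≠ 0 := by exact_mod_cast (hr x.succ).ne'
          simp only [hw, Function.comp]
          push_cast
          field_simp
        rw [e1]
        exact mul_le_mul_of_nonneg_left hJ1 hk0'.le
      · intro h
        apply hne
        rw [hmapV, map_smul, coeff_smul, h, smul_zero]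
    -- U part
    have hUpart : ∃ l : ℕ, (l : ℝ) * w 0 ≤ k * ω ∧
        coeff (Finsupp.single 0 l) (sh (fun _ => ξ 0) U) ≠ 0 := by
      let p : Polynomial ℤ := ∑ j ∈ Finset.range (k * r 0 + 1),
        Polynomial.monomial j (coeff (Finsupp.cons j J0) W₀)
      have hp : ∀ j, p.coeff j = coeff (Finsupp.cons j J0) W₀ := by
        intro j
        simp only [p, Polynomial.finsetSum_coeff, Polynomial.coeff_monomial]
        rw [Finset.sum_ite_eq']
        split_ifs with h
        · rfl
        · rw [coeff_eq_zero_of_degree (hdegW 0)]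
          simp at h; omega
      obtain ⟨l, hl, hle⟩ := onevar U hU p (coeff J0 V) hJ0
        (fun j => by rw [hp, hcoefW]) (ξ 0) (N W₀) (fun j => by rw [hp]; exact coeff_le_N _ _)
      refine ⟨l, ?_, hl⟩
      have h2 : ((ξ 0).den : ℝ) ^ l ≤ N W₀ := by exact_mod_cast hle
      have hden : (0 : ℝ) < (ξ 0).den := by exact_mod_cast (ξ 0).den_pos
      have h3 := Real.log_le_log (by positivity) h2
      rw [Real.log_pow] at h3
      have h4 := hht 0
      rw [← hSr] at h4
      have hNP1 : 0 ≤ Real.log (N P) := Real.log_natCast_nonneg _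
      have hSpos : (0 : ℝ) < S := by
        have : 0 < S := lt_of_lt_of_le (hr 0) hr0S
        exact_mod_cast this
      have hnn : (0 : ℝ) ≤ n := Nat.cast_nonneg _
      have hn1 : (2 : ℝ) * S ≤ 2 * ((n + 1 : ℕ) : ℝ) * S := by
        push_cast
        nlinarith
      have h5 : 0 < ω * r 0 * Real.log (ξ 0).den := by linarith
      have h6 : 0 < Real.log (ξ 0).den := by
        by_contra hneg
        have : ω * r 0 * Real.log (ξ 0).den ≤ 0 :=
          mul_nonpos_of_nonneg_of_nonpos (by positivity) (not_lt.1 hneg)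
        linarith
      have h7 : (l : ℝ) * Real.log (ξ 0).den ≤ (k * (ω * r 0)) * Real.log (ξ 0).den := by
        have : k * (Real.log (N P) + 2 * S) ≤ k * (ω * r 0 * Real.log (ξ 0).den) :=
          mul_le_mul_of_nonneg_left (by linarith) hk0'.le
        linarith
      have h8 := le_of_mul_le_mul_right h7 h6
      simp only [hw]
      rw [mul_one_div, div_le_iff₀ hr0]
      linarith
    obtain ⟨J1, hJ1, hV1⟩ := hVpart
    obtain ⟨l, hl, hU1⟩ := hUpart
    have hfin := hlow (Finsupp.cons l J1) (by
      rw [sh_mix, coeff_mix]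
      exact mul_ne_zero hV1 hU1)
    rw [wt_cons] at hfin
    have h2 : k * ((η - ω) ^ 2 / 8) ≤ k * (ω + η ^ 2 / 64) := by linarith
    have h3 := le_of_mul_le_mul_left h2 hk0'
    have h4 : ω ≤ η / 64 := by nlinarith
    have h5 : (63 / 64 * η) ^ 2 ≤ (η - ω) ^ 2 := by
      apply pow_le_pow_left₀ (by positivity)
      linarith
    nlinarith

end roths
end
end Mah

namespace Mah
open MvPolynomial
noncomputable section

lemma halfsum (r : ℕ) (hr : 0 < r) (s l : ℝ) (hs : s ^ 2 = 1) :
    ∑ j ∈ Finset.range (r + 1), Real.exp (l * (s * (j / r - 1 / 2))) ≤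
      (r + 1) * Real.exp (l ^ 2 / 8) := by
  have hr' : (0 : ℝ) < r := by exact_mod_cast hr
  have hrefl : ∑ j ∈ Finset.range (r + 1), Real.exp (l * (s * (j / r - 1 / 2))) =
      ∑ j ∈ Finset.range (r + 1), Real.exp (-(l * (s * (j / r - 1 / 2)))) := by
    rw [← Finset.sum_range_reflect]
    apply Finset.sum_congr rfl
    intro j hj
    have hj' : j ≤ r := by have := Finset.mem_range.1 hj; omega
    congr 1
    have : r + 1 - 1 - j = r - j := by omega
    rw [this, Nat.cast_sub hj']
    field_simp
    ring
  have : ∑ j ∈ Finset.range (r + 1), Real.exp (l * (s * (j / r - 1 / 2))) =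
      ∑ j ∈ Finset.range (r + 1), Real.cosh (l * (s * (j / r - 1 / 2))) := by
    have e : ∀ x : ℝ, Real.cosh x = (Real.exp x + Real.exp (-x)) / 2 := Real.cosh_eq
    simp only [e]
    rw [← Finset.sum_div, Finset.sum_add_distrib, ← hrefl]
    ring
  rw [this]
  calc _ ≤ ∑ j ∈ Finset.range (r + 1), Real.exp (l ^ 2 / 8) := by
        apply Finset.sum_le_sum
        intro j hj
        have hj' : (j : ℝ) ≤ r := by
          have := Finset.mem_range.1 hj
          exact_mod_cast (by omega : j ≤ r)
        refine (Real.cosh_le_exp_half_sq _).trans (Real.exp_le_exp.2 ?_)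
        have h0 : 0 ≤ (j : ℝ) / r := by positivity
        have h1 : (j : ℝ) / r ≤ 1 := (div_le_one hr').2 hj'
        have h2 : ((j : ℝ) / r - 1 / 2) ^ 2 ≤ 1 / 4 := by nlinarith
        rw [mul_pow, mul_pow, hs]
        nlinarith [sq_nonneg l]
    _ = _ := by simp

def box {m : ℕ} (r : Fin m → ℕ) : Finset (Fin m → ℕ) :=
  Fintype.piFinset (fun h => Finset.range (r h + 1))

lemma mem_box {m : ℕ} {r i : Fin m → ℕ} : i ∈ box r ↔ ∀ h, i h ≤ r h := by
  simp [box]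

lemma card_box {m : ℕ} (r : Fin m → ℕ) : (box r).card = ∏ h, (r h + 1) := by
  simp [box, Fintype.card_piFinset]

lemma card_box_le {m : ℕ} (r : Fin m → ℕ) : (box r).card ≤ 2 ^ (∑ h, r h) := by
  rw [card_box, ← Finset.prod_pow_eq_pow_sum]
  apply Finset.prod_le_prod'
  intro h _
  exact Nat.lt_two_pow_self

lemma tail {m : ℕ} (r : Fin m → ℕ) (hr : ∀ h, 0 < r h) (s ε : ℝ) (hs : s ^ 2 = 1)
    (hε : 0 < ε) (hm : 1 ≤ ε ^ 2 * m) :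
    4 * (((box r).filter (fun i => ε * m ≤ s * ∑ h, ((i h : ℝ) / r h - 1 / 2))).card : ℝ) ≤
      (box r).card := by
  set B := (box r).filter (fun i => ε * m ≤ s * ∑ h, ((i h : ℝ) / r h - 1 / 2)) with hB
  have h1 : (B.card : ℝ) * Real.exp (4 * ε * (ε * m)) ≤
      ∑ i ∈ box r, Real.exp (4 * ε * (s * ∑ h, ((i h : ℝ) / r h - 1 / 2))) := by
    calc (B.card : ℝ) * Real.exp (4 * ε * (ε * m)) = ∑ i ∈ B, Real.exp (4 * ε * (ε * m)) := by
          simp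
      _ ≤ ∑ i ∈ B, Real.exp (4 * ε * (s * ∑ h, ((i h : ℝ) / r h - 1 / 2))) := by
          apply Finset.sum_le_sum
          intro i hi
          apply Real.exp_le_exp.2
          have := (Finset.mem_filter.1 hi).2
          gcongr
      _ ≤ _ := by
          apply Finset.sum_le_sum_of_subset_of_nonneg (Finset.filter_subset _ _)
          intros; positivity
  have h2 : ∑ i ∈ box r, Real.exp (4 * ε * (s * ∑ h, ((i h : ℝ) / r h - 1 / 2))) =
      ∏ h, ∑ j ∈ Finset.range (r h + 1), Real.exp (4 * ε * (s * ((j : ℝ) / r h - 1 / 2))) := by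
    rw [Finset.prod_univ_sum]
    apply Finset.sum_congr rfl
    intro i _
    rw [← Real.exp_sum, Finset.mul_sum, Finset.mul_sum]
  have h3 : ∏ h, ∑ j ∈ Finset.range (r h + 1), Real.exp (4 * ε * (s * ((j : ℝ) / r h - 1 / 2)))
      ≤ ∏ h, (((r h : ℝ) + 1) * Real.exp ((4 * ε) ^ 2 / 8)) := by
    apply Finset.prod_le_prod
    · intros; positivity
    · intro h _
      exact halfsum (r h) (hr h) s (4 * ε) hs
  have h4 : ∏ h, (((r h : ℝ) + 1) * Real.exp ((4 * ε) ^ 2 / 8)) =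
      (box r).card * Real.exp (2 * (ε ^ 2 * m)) := by
    rw [Finset.prod_mul_distrib, card_box]
    push_cast
    congr 1
    rw [Finset.prod_const, ← Real.exp_nat_mul]
    congr 1
    simp
    ring
  have h5 : (B.card : ℝ) * Real.exp (2 * (ε ^ 2 * m)) * Real.exp (2 * (ε ^ 2 * m)) ≤
      (box r).card * Real.exp (2 * (ε ^ 2 * m)) := by
    rw [mul_assoc, ← Real.exp_add]
    calc _ = (B.card : ℝ) * Real.exp (4 * ε * (ε * m)) := by congr 2; ring
      _ ≤ _ := by rw [← h4, ]; exact h1.trans (h2 ▸ h3)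
  have h6 := le_of_mul_le_mul_right h5 (Real.exp_pos _)
  have h7 : 4 ≤ Real.exp (2 * (ε ^ 2 * m)) := by
    have : Real.exp 2 ≤ Real.exp (2 * (ε ^ 2 * m)) := Real.exp_le_exp.2 (by linarith)
    have e : Real.exp 2 = Real.exp 1 * Real.exp 1 := by rw [← Real.exp_add]; norm_num
    have := Real.exp_one_gt_d9
    nlinarith
  have h8 : (0 : ℝ) ≤ B.card := by positivity
  nlinarith

lemma coeff_sh_monomial {σ : Type} [Fintype σ] (ξ : σ → ℚ) (J i : σ →₀ ℕ) (a : ℚ) :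
    coeff J (sh ξ (monomial i a)) = a * bin i J * ∏ h, ξ h ^ (i h - J h) := by
  rw [← eval_hd, hd_monomial, eval_monomial, Finsupp.prod_fintype _ _ (by simp)]
  simp

lemma coeff_sh {σ : Type} [Fintype σ] (ξ : σ → ℚ) (J : σ →₀ ℕ) (P : MvPolynomial σ ℚ) :
    coeff J (sh ξ P) = ∑ i ∈ P.support, coeff i P * bin i J * ∏ h, ξ h ^ (i h - J h) := by
  conv_lhs => rw [P.as_sum]
  rw [map_sum, coeff_sum]
  simp only [coeff_sh_monomial]

lemma coeff_sh_one {σ : Type} [Fintype σ] (J i : σ →₀ ℕ) (a : ℤ) :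
    coeff J (sh 1 (monomial i a)) = a * bin i J := by
  have h := coeff_sh_monomial (1 : σ → ℚ) J i (a : ℚ)
  have e := map_sh (Int.castRingHom ℚ) (1 : σ → ℤ) (monomial i a)
  have e2 := congrArg (coeff J) e
  rw [coeff_map, map_monomial] at e2
  simp only [Pi.one_apply, map_one, eq_intCast] at e2
  have : (fun _ : σ => (1 : ℚ)) = 1 := rfl
  rw [this, h] at e2
  simp at e2
  exact_mod_cast e2


lemma N_X_add_one {σ : Type} [Fintype σ] (h : σ) : N (X h + 1 : MvPolynomial σ ℤ) ≤ 2 := by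
  refine (N_add _ _).trans ?_
  have h1 : N (X h : MvPolynomial σ ℤ) = 1 := N_monomial (Finsupp.single h 1) 1
  have h2 : N (1 : MvPolynomial σ ℤ) = 1 := N_monomial 0 1
  omega

lemma N_pow {σ : Type} [Fintype σ] (P : MvPolynomial σ ℤ) (k : ℕ) : N (P ^ k) ≤ N P ^ k := by
  have := N_prod (Finset.range k) (fun _ => P)
  simpa using this

lemma N_sh_monomial {σ : Type} [Fintype σ] (i : σ →₀ ℕ) (a : ℤ) :
    N (sh 1 (monomial i a) : MvPolynomial σ ℤ) ≤ 2 ^ (∑ h, i h) * a.natAbs := by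
  have e : (sh 1 (monomial i a) : MvPolynomial σ ℤ) = monomial 0 a * ∏ h, (X h + 1) ^ i h := by
    rw [monomial_eq, Finsupp.prod_fintype _ _ (by simp), map_mul, map_prod]
    congr 1
    · simp [sh]
    · simp only [map_pow, sh_X, Pi.one_apply, map_one]
  rw [e, mul_comm]
  refine (N_mul _ _).trans ?_
  rw [N_monomial]
  gcongr
  refine (N_prod _ _).trans ?_
  rw [← Finset.prod_pow_eq_pow_sum]
  apply Finset.prod_le_prod'
  intro h _
  exact (N_pow _ _).trans (Nat.pow_le_pow_left (N_X_add_one h) _)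

lemma N_sh {σ : Type} [Fintype σ] (r : σ → ℕ) (P : MvPolynomial σ ℤ)
    (h : ∀ x, degreeOf x P ≤ r x) : N (sh 1 P) ≤ 2 ^ (∑ x, r x) * N P := by
  conv_lhs => rw [P.as_sum, map_sum]
  refine (N_sum _ _).trans ?_
  rw [N, Finset.mul_sum]
  apply Finset.sum_le_sum
  intro i hi
  refine (N_sh_monomial _ _).trans ?_
  gcongr with x
  · norm_num
  · exact (degreeOf_le_iff.1 (h x)) i hi

section siegel
attribute [local instance] Matrix.seminormedAddCommGroup

lemma siegel_le {α β : Type} [Fintype α] [Fintype β] (A : Matrix α β ℤ) (B : ℕ) (hB : 1 ≤ B)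
    (hA : ∀ i j, |A i j| ≤ B) (h2 : 2 * Fintype.card α ≤ Fintype.card β)
    (hm : 0 < Fintype.card α) :
    ∃ t : β → ℤ, t ≠ 0 ∧ A.mulVec t = 0 ∧ ∀ j, (t j).natAbs ≤ Fintype.card β * B := by
  classical
  obtain ⟨t, ht, hAt, hn⟩ := Int.Matrix.exists_ne_zero_int_vec_norm_le A (by omega) hm
  refine ⟨t, ht, hAt, ?_⟩
  intro j
  have hA' : ‖A‖ ≤ B := by
    rw [Matrix.norm_le_iff (by positivity)]
    intro i j
    rw [Int.norm_eq_abs]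
    exact_mod_cast hA i j
  have hmax : max 1 ‖A‖ ≤ (B : ℝ) := max_le (by exact_mod_cast hB) hA'
  have hc : (1 : ℝ) ≤ Fintype.card β := by
    exact_mod_cast (by omega : 1 ≤ Fintype.card β)
  have h2' : 2 * (Fintype.card α : ℝ) ≤ Fintype.card β := by exact_mod_cast h2
  have hm' : (0 : ℝ) < Fintype.card α := by exact_mod_cast hm
  have h3 : ((Fintype.card β : ℝ) * max 1 ‖A‖) ^
      ((Fintype.card α : ℝ) / (Fintype.card β - Fintype.card α)) ≤
      (Fintype.card β : ℝ) * max 1 ‖A‖ := by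
    have hb : 1 ≤ (Fintype.card β : ℝ) * max 1 ‖A‖ :=
      one_le_mul_of_one_le_of_one_le hc (le_max_left _ _)
    calc _ ≤ ((Fintype.card β : ℝ) * max 1 ‖A‖) ^ (1 : ℝ) := by
          apply Real.rpow_le_rpow_of_exponent_le hb
          rw [div_le_one (by linarith)]
          linarith
      _ = _ := Real.rpow_one _
  have h4 : ‖t j‖ ≤ ‖t‖ := norm_le_pi_norm t j
  have h5 : ‖t j‖ ≤ (Fintype.card β : ℝ) * B :=
    h4.trans (hn.trans (h3.trans (by gcongr)))
  rw [Int.norm_eq_abs, ← Int.cast_abs] at h5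
  have h6 : |t j| ≤ Fintype.card β * B := by exact_mod_cast h5
  rw [Int.abs_eq_natAbs] at h6
  exact_mod_cast h6

end siegel

lemma wt_eq {m : ℕ} (r : Fin m → ℕ) (i : Fin m →₀ ℕ) :
    wt (fun h => 1 / (r h : ℝ)) i = ∑ h, ((i h : ℝ) / r h - 1 / 2) + m / 2 := by
  simp only [wt, Finset.sum_sub_distrib, mul_one_div]
  simp
  ring

lemma aux {m : ℕ} (r : Fin m → ℕ) (hr : ∀ h, 0 < r h) (ε : ℝ)
    (hε : 0 < ε) (hε2 : ε ≤ 1 / 2) (hm : 1 ≤ ε ^ 2 * m) :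
    ∃ P : MvPolynomial (Fin m) ℤ, P ≠ 0 ∧ (∀ h, degreeOf h P ≤ r h) ∧
      (∀ i ∈ P.support, (1 / 2 - ε) * m ≤ wt (fun h => 1 / (r h : ℝ)) i ∧
        wt (fun h => 1 / (r h : ℝ)) i ≤ (1 / 2 + ε) * m) ∧
      Ge (fun h => 1 / (r h : ℝ)) ((1 / 2 - ε) * m) (sh 1 P) ∧ N P ≤ 8 ^ (∑ h, r h) := by
  classical
  let E : (Fin m → ℕ) → (Fin m →₀ ℕ) := fun i => Finsupp.equivFunOnFinite.symm i
  have hEinj : Function.Injective E := Finsupp.equivFunOnFinite.symm.injective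
  have hE : ∀ i h, E i h = i h := fun i h => rfl
  let f : (Fin m → ℕ) → ℝ := fun i => ∑ h, ((i h : ℝ) / r h - 1 / 2)
  have hf : ∀ i, wt (fun h => 1 / (r h : ℝ)) (E i) = f i + m / 2 := fun i => wt_eq r (E i)
  let U := (box r).filter (fun i => ε * m ≤ 1 * f i)
  let L := (box r).filter (fun i => ε * m ≤ (-1) * f i)
  let W := (box r).filter (fun i => |f i| < ε * m)
  have hU : 4 * (U.card : ℝ) ≤ (box r).card := tail r hr 1 ε (by norm_num) hε hm
  have hL : 4 * (L.card : ℝ) ≤ (box r).card := tail r hr (-1) ε (by norm_num) hε hm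
  have hcov : (box r).card ≤ W.card + (U.card + L.card) := by
    have : box r ⊆ W ∪ (U ∪ L) := by
      intro i hi
      simp only [W, U, L, Finset.mem_union, Finset.mem_filter, hi, true_and]
      by_cases h : |f i| < ε * m
      · exact Or.inl h
      · right
        rw [not_lt, le_abs] at h
        rcases h with h | h
        · left; linarith
        · right; linarith
    exact (Finset.card_le_card this).trans ((Finset.card_union_le _ _).trans
      (Nat.add_le_add_left (Finset.card_union_le _ _) _))
  have hU' : 4 * U.card ≤ (box r).card := by exact_mod_cast hU
  have hL' : 4 * L.card ≤ (box r).card := by exact_mod_cast hL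
  have h2 : 2 * L.card ≤ W.card := by omega
  have hL0 : 0 < L.card := by
    apply Finset.card_pos.2
    refine ⟨0, Finset.mem_filter.2 ⟨mem_box.2 (by simp), ?_⟩⟩
    simp only [f]
    simp
    nlinarith [(Nat.cast_nonneg m : (0 : ℝ) ≤ m)]
  set S := ∑ h, r h with hS
  obtain ⟨t, ht, hAt, htb⟩ := siegel_le
    (Matrix.of (fun (K : L) (i : W) => (bin (E i) (E K) : ℤ))) (2 ^ S) Nat.one_le_two_pow
    (by
      intro K i
      simp only [Matrix.of_apply, Nat.abs_cast]
      have := bin_le r (E i) (E K) (mem_box.1 (Finset.mem_filter.1 i.2).1)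
      exact_mod_cast this) (by simpa using h2) (by simpa using hL0)
  let P : MvPolynomial (Fin m) ℤ := ∑ i : W, monomial (E i) (t i)
  have hcoeff : ∀ i : W, coeff (E i) P = t i := by
    intro i
    simp only [P, coeff_sum, coeff_monomial]
    rw [Finset.sum_eq_single i]
    · simp
    · intro j _ hj
      rw [if_neg]
      intro h
      exact hj (Subtype.ext (hEinj h))
    · simp
  have hsupp : ∀ i ∈ P.support, ∃ j ∈ W, i = E j := by
    intro i hi
    rw [mem_support_iff] at hi
    simp only [P, coeff_sum, coeff_monomial] at hi
    obtain ⟨j, _, hj⟩ := Finset.exists_ne_zero_of_sum_ne_zero hi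
    refine ⟨j, j.2, ?_⟩
    by_contra hne
    exact hj (if_neg (fun h => hne h.symm))
  have hdeg : ∀ h, degreeOf h P ≤ r h := by
    intro h
    rw [degreeOf_le_iff]
    intro i hi
    obtain ⟨j, hj, rfl⟩ := hsupp i hi
    exact mem_box.1 (Finset.mem_filter.1 hj).1 h
  refine ⟨P, ?_, hdeg, ?_, ?_, ?_⟩
  · intro h0
    apply ht
    ext i
    rw [← hcoeff i, h0]; simp
  · intro i hi
    obtain ⟨j, hj, rfl⟩ := hsupp i hi
    have := abs_lt.1 (Finset.mem_filter.1 hj).2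
    rw [hf]
    constructor <;> linarith [this.1, this.2]
  · intro K hK
    have hsum : coeff K (sh 1 P) = ∑ i : W, t i * bin (E i) K := by
      simp only [P, map_sum, coeff_sum, coeff_sh_one]
    obtain ⟨K, rfl⟩ : ∃ K', K = E K' := ⟨K, by ext; rfl⟩
    rw [hf]
    by_contra hlt
    have hKbox : K ∈ box r := by
      rw [hsum] at hK
      obtain ⟨i, _, hi⟩ := Finset.exists_ne_zero_of_sum_ne_zero hK
      have hle : E K ≤ E i := by
        by_contra h
        rw [bin_eq_zero h] at hi
        simp at hi
      rw [mem_box]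
      intro h
      exact (hle h).trans (mem_box.1 (Finset.mem_filter.1 i.2).1 h)
    have hKL : K ∈ L := Finset.mem_filter.2 ⟨hKbox, by linarith⟩
    have := congrFun hAt ⟨K, hKL⟩
    simp only [Matrix.mulVec, dotProduct, Matrix.of_apply, Pi.zero_apply] at this
    apply hK
    rw [hsum, ← this]
    apply Finset.sum_congr rfl
    intros; ring
  · refine (N_sum _ _).trans ?_
    simp only [N_monomial]
    have hW : W.card ≤ 2 ^ S := (Finset.card_filter_le _ _).trans (card_box_le r)
    calc ∑ i : W, (t i).natAbs ≤ ∑ i : W, (2 ^ S * 2 ^ S) := by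
          apply Finset.sum_le_sum
          intro i _
          refine (htb i).trans ?_
          gcongr
          simpa using hW
      _ = W.card * (2 ^ S * 2 ^ S) := by simp
      _ ≤ 2 ^ S * (2 ^ S * 2 ^ S) := by gcongr
      _ = 8 ^ S := by rw [← mul_pow, ← mul_pow]; norm_num

end
end Mah

namespace Mah
open MvPolynomial
noncomputable section

lemma supp_sh_one {σ : Type} [Fintype σ] (r : σ → ℕ) (P : MvPolynomial σ ℤ)
    (h : ∀ x, degreeOf x P ≤ r x) (K : σ →₀ ℕ) (hK : coeff K (sh 1 P) ≠ 0) (x : σ) :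
    K x ≤ r x := by
  have e : coeff K (sh 1 P) = ∑ i ∈ P.support, coeff i P * bin i K := by
    conv_lhs => rw [P.as_sum, map_sum, coeff_sum]
    simp only [coeff_sh_one]
  rw [e] at hK
  obtain ⟨i, hi, hne⟩ := Finset.exists_ne_zero_of_sum_ne_zero hK
  have hle : K ≤ i := by
    by_contra h
    rw [bin_eq_zero h] at hne
    simp at hne
  exact (hle x).trans (degreeOf_le_iff.1 (h x) i hi)

lemma wt_D {m : ℕ} (n r : Fin m → ℕ) (D : ℕ) (hr : ∀ h, 0 < r h) (hnr : ∀ h, n h * r h = D)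
    (K : Fin m → ℕ) :
    ((∑ h, n h * K h : ℕ) : ℝ) = D * ∑ h, (K h : ℝ) * (1 / (r h : ℝ)) := by
  push_cast
  rw [Finset.mul_sum]
  apply Finset.sum_congr rfl
  intro h _
  have : (r h : ℝ) ≠ 0 := by exact_mod_cast (hr h).ne'
  have e : (n h : ℝ) * r h = D := by exact_mod_cast hnr h
  rw [← e]
  field_simp

lemma wt_sub_ge {m : ℕ} (n r : Fin m → ℕ) (D : ℕ) (hr : ∀ h, 0 < r h)
    (hnr : ∀ h, n h * r h = D) (K J : Fin m → ℕ) (hJK : ∀ h, J h ≤ K h) (s : ℕ)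
    (hs : (s : ℝ) < D * (∑ h, (K h : ℝ) * (1 / (r h : ℝ)) -
      ∑ h, (J h : ℝ) * (1 / (r h : ℝ))) + 1) :
    s ≤ ∑ h, n h * (K h - J h) := by
  have e := wt_D n r D hr hnr (fun h => K h - J h)
  have e2 : ∑ h, ((K h - J h : ℕ) : ℝ) * (1 / (r h : ℝ)) =
      ∑ h, (K h : ℝ) * (1 / (r h : ℝ)) - ∑ h, (J h : ℝ) * (1 / (r h : ℝ)) := by
    rw [← Finset.sum_sub_distrib]
    apply Finset.sum_congr rfl
    intro h _
    rw [Nat.cast_sub (hJK h)]; ring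
  rw [e2] at e
  rw [← e] at hs
  have : s < (∑ h, n h * (K h - J h)) + 1 := by exact_mod_cast hs
  omega

lemma core {m : ℕ} (n r : Fin m → ℕ) (D a b s : ℕ) (hr : ∀ h, 0 < r h)
    (hnr : ∀ h, n h * r h = D) (ha : 0 < a) (hb : 0 < b)
    (y : Fin m → ℕ) (hy0 : ∀ h, 0 < y h) (hyb : ∀ h, b ^ n h ∣ y h)
    (hya : ∀ h, y h ≤ 2 * a ^ n h)
    (ρ : ℝ) (hρ0 : 0 ≤ ρ) (hρ1 : ρ ≤ 1) (ξ : Fin m → ℚ) (hξ : ∀ h, ξ h = (a : ℚ) ^ n h / y h)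
    (hξρ : ∀ h, |(ξ h : ℝ) - 1| ≤ 2 * ρ ^ n h) (ε : ℝ) (hε : 0 < ε)
    (P : MvPolynomial (Fin m) ℤ) (hdeg : ∀ h, degreeOf h P ≤ r h)
    (hw : ∀ i ∈ P.support, (1 / 2 - ε) * m ≤ wt (fun h => 1 / (r h : ℝ)) i ∧
        wt (fun h => 1 / (r h : ℝ)) i ≤ (1 / 2 + ε) * m)
    (hGe : Ge (fun h => 1 / (r h : ℝ)) ((1 / 2 - ε) * m) (sh 1 P))
    (hN : N P ≤ 8 ^ (∑ h, r h)) (J : Fin m →₀ ℕ)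
    (hJw : wt (fun h => 1 / (r h : ℝ)) J ≤ ε * m)
    (hJ : coeff J (sh ξ (map (Int.castRingHom ℚ) P)) ≠ 0)
    (hs : (s : ℝ) < (1 / 2 - 2 * ε) * m * D + 1) :
    ((a : ℝ) * b) ^ s ≤ 2 ^ (7 * ∑ h, r h) * a ^ (m * D) * ρ ^ s := by
  classical
  set S := ∑ h, r h with hS
  have hsum := coeff_sh ξ J (map (Int.castRingHom ℚ) P)
  have hsupp : (map (Int.castRingHom ℚ) P).support = P.support :=
    support_map_of_injective _ (Int.cast_injective)
  rw [hsupp] at hsum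
  simp only [coeff_map, eq_intCast] at hsum
  have hir : ∀ i ∈ P.support, ∀ h, i h ≤ r h := fun i hi h => degreeOf_le_iff.1 (hdeg h) i hi
  have hD0 : (0 : ℝ) ≤ D := by positivity
  have hm0 : (0 : ℝ) ≤ m := by positivity
  have hJr : ∀ h, J h ≤ r h := by
    rw [hsum] at hJ
    obtain ⟨i, hi, hne⟩ := Finset.exists_ne_zero_of_sum_ne_zero hJ
    have hle : J ≤ i := by
      by_contra h
      rw [bin_eq_zero h] at hne
      simp at hne
    exact fun h => (hle h).trans (hir i hi h)
  -- integer
  let Z : ℤ := ∑ i ∈ P.support, coeff i P * bin i J *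
    (∏ h, ((a : ℤ) ^ n h) ^ (i h - J h) * (y h : ℤ) ^ (r h - i h))
  have hZ : (Z : ℚ) = (∏ h, (y h : ℚ) ^ (r h - J h)) *
      coeff J (sh ξ (map (Int.castRingHom ℚ) P)) := by
    rw [hsum, Finset.mul_sum]
    simp only [Z]
    push_cast
    apply Finset.sum_congr rfl
    intro i hi
    by_cases hle : J ≤ i
    · have : ∏ h, (((a : ℚ) ^ n h) ^ (i h - J h) * (y h : ℚ) ^ (r h - i h)) =
          (∏ h, (y h : ℚ) ^ (r h - J h)) * ∏ h, ξ h ^ (i h - J h) := by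
        rw [← Finset.prod_mul_distrib]
        apply Finset.prod_congr rfl
        intro h _
        have e : r h - J h = (r h - i h) + (i h - J h) := by
          have := hir i hi h
          have := hle h
          omega
        have hy : (y h : ℚ) ≠ 0 := by exact_mod_cast (hy0 h).ne'
        rw [hξ, e, pow_add, div_pow]
        field_simp
      rw [this]; ring
    · rw [bin_eq_zero hle]; simp
  have hZne : Z ≠ 0 := by
    intro h0
    rw [h0] at hZ
    have hp : (∏ h, (y h : ℚ) ^ (r h - J h)) ≠ 0 := by
      apply Finset.prod_ne_zero_iff.2
      intro h _
      exact pow_ne_zero _ (by exact_mod_cast (hy0 h).ne')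
    exact mul_ne_zero hp hJ (by rw [← hZ]; simp)
  have hdvd : ((a : ℤ) * b) ^ s ∣ Z := by
    apply Finset.dvd_sum
    intro i hi
    by_cases hle : J ≤ i
    · apply Dvd.dvd.mul_left
      rw [Finset.prod_mul_distrib, mul_pow]
      apply mul_dvd_mul
      · simp only [← pow_mul]
        rw [Finset.prod_pow_eq_pow_sum]
        apply pow_dvd_pow
        apply wt_sub_ge n r D hr hnr i J hle
        have h1 := (hw i hi).1
        simp only [wt] at h1 hJw
        refine hs.trans_le ?_
        have : D * ((1 / 2 - 2 * ε) * m) ≤ D * (∑ h, (i h : ℝ) * (1 / (r h : ℝ)) -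
          ∑ h, (J h : ℝ) * (1 / (r h : ℝ))) := by
          apply mul_le_mul_of_nonneg_left _ hD0
          linarith
        linarith
      · have h3 : (b : ℤ) ^ (∑ h, n h * (r h - i h)) ∣ ∏ h, (y h : ℤ) ^ (r h - i h) := by
          rw [← Finset.prod_pow_eq_pow_sum]
          apply Finset.prod_dvd_prod_of_dvd
          intro h _
          rw [pow_mul]
          apply pow_dvd_pow_of_dvd
          exact_mod_cast hyb h
        refine dvd_trans (pow_dvd_pow _ ?_) h3
        apply wt_sub_ge n r D hr hnr r i (hir i hi)
        have h1 := (hw i hi).2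
        simp only [wt] at h1
        have hrr : ∑ h, (r h : ℝ) * (1 / (r h : ℝ)) = m := by
          have : ∀ h, (r h : ℝ) * (1 / (r h : ℝ)) = 1 := by
            intro h
            have : (r h : ℝ) ≠ 0 := by exact_mod_cast (hr h).ne'
            field_simp
          rw [Finset.sum_congr rfl (fun h _ => this h)]
          simp
        rw [hrr]
        refine hs.trans_le ?_
        have : D * ((1 / 2 - 2 * ε) * m) ≤ D * ((m : ℝ) - ∑ h, (i h : ℝ) * (1 / (r h : ℝ))) := by
          apply mul_le_mul_of_nonneg_left _ hD0
          nlinarith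
        linarith
    · rw [bin_eq_zero hle]; simp
  have hlow : ((a : ℝ) * b) ^ s ≤ |(Z : ℝ)| := by
    have := Int.le_of_dvd (abs_pos.2 hZne) ((dvd_abs _ _).2 hdvd)
    exact_mod_cast this
  -- upper bound
  have hQ : coeff J (sh ξ (map (Int.castRingHom ℚ) P)) =
      ∑ K ∈ (sh 1 P).support, ((coeff K (sh 1 P) : ℤ) : ℚ) * bin K J *
        ∏ h, (ξ h - 1) ^ (K h - J h) := by
    have e : sh ξ (map (Int.castRingHom ℚ) P) =
        sh (fun h => ξ h - 1) (map (Int.castRingHom ℚ) (sh 1 P)) := by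
      rw [map_sh, sh_sh]
      congr 2
      ext h
      simp
    rw [e, coeff_sh, support_map_of_injective _ (Int.cast_injective)]
    simp only [coeff_map, eq_intCast]
  have hup : |((coeff J (sh ξ (map (Int.castRingHom ℚ) P)) : ℚ) : ℝ)| ≤ 2 ^ (6 * S) * ρ ^ s := by
    rw [hQ]
    push_cast
    refine (Finset.abs_sum_le_sum_abs _ _).trans ?_
    have hterm : ∀ K ∈ (sh 1 P).support, |((coeff K (sh 1 P) : ℤ) : ℝ) * bin K J *
        ∏ h, ((ξ h : ℝ) - 1) ^ (K h - J h)| ≤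
        ((coeff K (sh 1 P)).natAbs : ℝ) * (2 ^ S * (2 ^ S * ρ ^ s)) := by
      intro K hK
      have hKne := mem_support_iff.1 hK
      have hKr := supp_sh_one r P hdeg K hKne
      by_cases hle : J ≤ K
      · rw [abs_mul, abs_mul, mul_assoc]
        have h1 : |((coeff K (sh 1 P) : ℤ) : ℝ)| = ((coeff K (sh 1 P)).natAbs : ℝ) := by
          rw [Nat.cast_natAbs, Int.cast_abs]
        rw [h1]
        gcongr
        · rw [Nat.abs_cast]
          exact_mod_cast bin_le r K J hKr
        · rw [Finset.abs_prod]
          calc ∏ h, |((ξ h : ℝ) - 1) ^ (K h - J h)|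
              ≤ ∏ h, (2 ^ (r h) * ρ ^ (n h * (K h - J h))) := by
                apply Finset.prod_le_prod
                · intros; positivity
                · intro h _
                  rw [abs_pow]
                  calc _ ≤ (2 * ρ ^ n h) ^ (K h - J h) := by gcongr; exact hξρ h
                    _ = 2 ^ (K h - J h) * ρ ^ (n h * (K h - J h)) := by rw [mul_pow, pow_mul]
                    _ ≤ _ := by
                      gcongr
                      · norm_num
                      · have := hKr h
                        omega
            _ = 2 ^ S * ρ ^ (∑ h, n h * (K h - J h)) := by
                rw [Finset.prod_mul_distrib, Finset.prod_pow_eq_pow_sum,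
                  Finset.prod_pow_eq_pow_sum]
            _ ≤ 2 ^ S * ρ ^ s := by
                gcongr ?_ * ?_
                apply pow_le_pow_of_le_one hρ0 hρ1
                apply wt_sub_ge n r D hr hnr K J hle
                have h1 := hGe K hKne
                simp only [wt] at h1 hJw
                refine hs.trans_le ?_
                have : D * ((1 / 2 - 2 * ε) * m) ≤ D * (∑ h, (K h : ℝ) * (1 / (r h : ℝ)) -
                  ∑ h, (J h : ℝ) * (1 / (r h : ℝ))) := by
                  apply mul_le_mul_of_nonneg_left _ hD0
                  linarith
                linarith
      · rw [bin_eq_zero hle]; simp; positivity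
    refine (Finset.sum_le_sum hterm).trans ?_
    rw [← Finset.sum_mul]
    have hNQ : (∑ K ∈ (sh 1 P).support, ((coeff K (sh 1 P)).natAbs : ℝ)) ≤ 2 ^ S * 8 ^ S := by
      have : N (sh 1 P) ≤ 2 ^ S * 8 ^ S := (N_sh r P hdeg).trans (by gcongr)
      unfold N at this
      exact_mod_cast this
    calc _ ≤ (2 ^ S * 8 ^ S : ℝ) * (2 ^ S * (2 ^ S * ρ ^ s)) := by gcongr
      _ = (2 * 8 * 2 * 2) ^ S * ρ ^ s := by rw [mul_pow, mul_pow, mul_pow]; ring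
      _ = _ := by rw [pow_mul]; norm_num
  have hprod : (∏ h, (y h : ℝ) ^ (r h - J h)) ≤ 2 ^ S * a ^ (m * D) := by
    calc (∏ h, (y h : ℝ) ^ (r h - J h)) ≤ ∏ h, (2 ^ r h * (a : ℝ) ^ D) := by
          apply Finset.prod_le_prod
          · intros; positivity
          · intro h _
            have h1 : (1 : ℝ) ≤ y h := by exact_mod_cast hy0 h
            calc _ ≤ (y h : ℝ) ^ r h := pow_le_pow_right₀ h1 (Nat.sub_le _ _)
              _ ≤ (2 * (a : ℝ) ^ n h) ^ r h := by gcongr; exact_mod_cast hya h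
              _ = _ := by rw [mul_pow, ← pow_mul, hnr]
      _ = _ := by
          rw [Finset.prod_mul_distrib, Finset.prod_pow_eq_pow_sum]
          simp [← pow_mul, mul_comm, hS]
  refine hlow.trans ?_
  have hZ' : (Z : ℝ) = (∏ h, (y h : ℝ) ^ (r h - J h)) *
      ((coeff J (sh ξ (map (Int.castRingHom ℚ) P)) : ℚ) : ℝ) := by
    have := congrArg (fun q : ℚ => (q : ℝ)) hZ
    push_cast at this
    exact this
  rw [hZ', abs_mul, abs_of_nonneg (by positivity)]
  calc _ ≤ (2 ^ S * (a : ℝ) ^ (m * D)) * (2 ^ (6 * S) * ρ ^ s) := by gcongr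
    _ = _ := by
      have : 7 * S = S + 6 * S := by ring
      rw [this, pow_add]; ring

end
end Mah

namespace Mah
open MvPolynomial
noncomputable section

lemma choose_n (A : Set ℕ) (hA : A.Infinite) (N1 : ℕ) (ω : ℝ) (hω : 0 < ω) (m : ℕ) :
    ∃ n : Fin m → ℕ, (∀ h, n h ∈ A ∧ N1 ≤ n h) ∧ ∀ i j, i < j → (n j : ℝ) ≤ ω * n i := by
  induction m with
  | zero => exact ⟨fun _ => 0, fun h => h.elim0, fun i => i.elim0⟩
  | succ m ih =>
    obtain ⟨n, hn, hlac⟩ := ih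
    obtain ⟨k, hk, hgt⟩ := hA.exists_gt (max N1 ⌈(∑ h, (n h : ℝ)) / ω⌉₊)
    have hk1 : N1 ≤ k := (le_max_left _ _).trans hgt.le
    have hk2 : (∑ h, (n h : ℝ)) / ω ≤ k :=
      Nat.ceil_le.1 ((le_max_right _ _).trans hgt.le)
    refine ⟨Fin.cons k n, ?_, ?_⟩
    · intro h
      refine Fin.cases ?_ ?_ h
      · exact ⟨hk, hk1⟩
      · intro h; simpa using hn h
    · intro i j
      refine Fin.cases ?_ ?_ j
      · intro h; exact absurd h (Fin.not_lt_zero i)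
      · intro j
        refine Fin.cases ?_ ?_ i
        · intro _
          simp only [Fin.cons_succ, Fin.cons_zero]
          have h1 : (n j : ℝ) ≤ ∑ h, (n h : ℝ) :=
            Finset.single_le_sum (f := fun h => (n h : ℝ)) (fun _ _ => by positivity)
              (Finset.mem_univ j)
          rw [div_le_iff₀ hω] at hk2
          linarith
        · intro i hij
          simpa using hlac i j (by simpa using hij)

lemma point (α : ℚ) (a b : ℕ) (ha : 0 < a) (hb : 0 < b) (hab : α = (a : ℚ) / b) (hbd : b = α.den)
    (c : ℝ) (n : ℕ)
    (hn : |((α : ℝ)) ^ n - round (((α : ℝ)) ^ n)| < c ^ n) (ρ : ℝ) (hρ : ρ = c * b / a)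
    (hρn : ρ ^ n ≤ 1 / 2) :
    ∃ y : ℕ, 0 < y ∧ b ^ n ∣ y ∧ y ≤ 2 * a ^ n ∧
      |(((a : ℚ) ^ n / y : ℚ) : ℝ) - 1| ≤ 2 * ρ ^ n ∧ b ^ n ≤ ((a : ℚ) ^ n / y : ℚ).den := by
  set M := round (((α : ℝ)) ^ n) with hM
  have ha' : (0 : ℝ) < (a : ℝ) ^ n := by positivity
  have hb' : (0 : ℝ) < (b : ℝ) ^ n := by positivity
  have hαn : (α : ℝ) ^ n = (a : ℝ) ^ n / (b : ℝ) ^ n := by rw [hab]; push_cast; rw [div_pow]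
  have hρa : ρ ^ n * (a : ℝ) ^ n = c ^ n * (b : ℝ) ^ n := by
    rw [← mul_pow, ← mul_pow, hρ]
    congr 1
    have : (a : ℝ) ≠ 0 := by positivity
    field_simp
  have hxy : |(a : ℝ) ^ n - (b : ℝ) ^ n * M| ≤ ρ ^ n * (a : ℝ) ^ n := by
    have : (a : ℝ) ^ n - (b : ℝ) ^ n * M = (b : ℝ) ^ n * ((α : ℝ) ^ n - M) := by
      rw [hαn]; field_simp
    rw [this, abs_mul, abs_of_pos hb', hρa, mul_comm]
    gcongr
  have hhalf : ρ ^ n * (a : ℝ) ^ n ≤ 1 / 2 * (a : ℝ) ^ n := by gcongr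
  have habs := abs_le.1 hxy
  have hy1 : (a : ℝ) ^ n / 2 ≤ (b : ℝ) ^ n * M := by linarith [habs.2]
  have hy2 : (b : ℝ) ^ n * M ≤ 2 * (a : ℝ) ^ n := by linarith [habs.1]
  have hMpos : 0 < M := by
    have : (0 : ℝ) < (b : ℝ) ^ n * M := by linarith
    have := pos_of_mul_pos_right this hb'.le
    exact_mod_cast this
  obtain ⟨k, hk⟩ := Int.eq_ofNat_of_zero_le hMpos.le
  have hMk : (M : ℝ) = k := by rw [hk]; simp
  rw [hMk] at hxy hy1 hy2
  have hk0 : 0 < k := by omega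
  refine ⟨b ^ n * k, by positivity, Dvd.intro _ rfl, by exact_mod_cast hy2, ?_, ?_⟩
  · push_cast
    have hypos : (0 : ℝ) < (b : ℝ) ^ n * k := by positivity
    have e : (a : ℝ) ^ n / ((b : ℝ) ^ n * k) - 1 =
        ((a : ℝ) ^ n - (b : ℝ) ^ n * k) / ((b : ℝ) ^ n * k) := by
      field_simp
    rw [e, abs_div, abs_of_pos hypos, div_le_iff₀ hypos]
    have h0 : 0 ≤ ρ ^ n := by
      have := (abs_nonneg _).trans hxy
      exact nonneg_of_mul_nonneg_left this ha'
    nlinarith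
  · have hkq : (k : ℚ) ≠ 0 := by exact_mod_cast hk0.ne'
    have hbq : (b : ℚ) ≠ 0 := by exact_mod_cast hb.ne'
    have e : ((a : ℚ) ^ n / ((b ^ n * k : ℕ) : ℚ)) * (k : ℚ) = α ^ n := by
      rw [hab]; push_cast
      rw [div_pow]
      field_simp
    have h1 := Rat.mul_den_dvd ((a : ℚ) ^ n / ((b ^ n * k : ℕ) : ℚ)) (k : ℚ)
    rw [e, Rat.den_pow, ← hbd, Rat.den_natCast, mul_one] at h1
    exact Nat.le_of_dvd (Rat.den_pos _) h1

set_option maxHeartbeats 1000000 in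
theorem main (α : ℚ) (hα : 1 < α) (hnotint : ¬ ∃ m : ℤ, α = m)
    (c : ℝ) (hc0 : 0 < c) (hc1 : c < 1) :
    {n : ℕ | 0 < n ∧ |((α : ℝ)) ^ n - round (((α : ℝ)) ^ n)| < c ^ n}.Finite := by
  by_contra hinf
  set A := {n : ℕ | 0 < n ∧ |((α : ℝ)) ^ n - round (((α : ℝ)) ^ n)| < c ^ n} with hA
  have hinf : A.Infinite := hinf
  -- numerator and denominator
  obtain ⟨a, hanum⟩ := Int.eq_ofNat_of_zero_le (Rat.num_nonneg.2 (by linarith : (0 : ℚ) ≤ α))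
  set b := α.den with hbd
  have hb0 : 0 < b := α.den_pos
  have hab : α = (a : ℚ) / b := by
    conv_lhs => rw [← Rat.num_div_den α, hanum]
    simp [hbd]
  have hb1 : b ≠ 1 := fun h => hnotint ⟨α.num, ((Rat.den_eq_one_iff α).1 h).symm⟩
  have hb2 : 2 ≤ b := by omega
  have hbq : (0 : ℚ) < b := by exact_mod_cast hb0
  have hba : b < a := by
    have h := hα
    rw [hab, lt_div_iff₀ hbq, one_mul] at h
    exact_mod_cast h
  have ha0 : 0 < a := by omega
  have haR : (1 : ℝ) < a := by exact_mod_cast (by omega : 1 < a)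
  have hbR : (1 : ℝ) < b := by exact_mod_cast (by omega : 1 < b)
  have hbaR : (b : ℝ) < a := by exact_mod_cast hba
  have hla : 0 < Real.log a := Real.log_pos haR
  set l := -Real.log c with hl
  have hl0 : 0 < l := by have := Real.log_neg hc0 hc1; linarith
  obtain ⟨ε, hε0, hε8, hεl⟩ : ∃ ε : ℝ, 0 < ε ∧ ε ≤ 1 / 8 ∧ 32 * ε * Real.log a ≤ l := by
    refine ⟨min (1 / 8) (l / (32 * Real.log a)), by positivity, min_le_left _ _, ?_⟩
    have h := min_le_right (1 / 8) (l / (32 * Real.log a))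
    rw [le_div_iff₀ (by positivity)] at h
    linarith
  obtain ⟨m, hm⟩ : ∃ m : ℕ, 1 ≤ ε ^ 2 * m := by
    obtain ⟨m, hm⟩ := exists_nat_ge (1 / ε ^ 2)
    refine ⟨m, ?_⟩
    rw [div_le_iff₀ (by positivity)] at hm
    linarith
  have hm1 : 1 ≤ m := by
    rcases Nat.eq_zero_or_pos m with h | h
    · rw [h] at hm; norm_num at hm
    · exact h
  have hmR : (1 : ℝ) ≤ m := by exact_mod_cast hm1
  obtain ⟨ω, hω, hroth⟩ := roth m ε hε0 (by linarith)
  set ρ := c * b / a with hρ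
  have hρ0 : 0 < ρ := by positivity
  have hρ1 : ρ < 1 := by
    rw [hρ, div_lt_one (by positivity)]
    nlinarith
  obtain ⟨k, hk⟩ := exists_pow_lt_of_lt_one (by norm_num : (0 : ℝ) < 1 / 2) hρ1
  have hlog2 : 0 < Real.log 2 := Real.log_pos (by norm_num)
  obtain ⟨N2, hN2⟩ := exists_nat_gt ((3 * Real.log 2 + 2 * m) * m / (ω * Real.log 2))
  obtain ⟨N3, hN3⟩ := exists_nat_gt (56 * Real.log 2 / l)
  set N1 := max k (max N2 N3) with hN1
  have hN2' : (3 * Real.log 2 + 2 * m) * m ≤ N1 * (ω * Real.log 2) := by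
    rw [← div_le_iff₀ (by positivity)]
    refine hN2.le.trans ?_
    exact_mod_cast (le_max_left _ _).trans (le_max_right _ _)
  have hN3' : 56 * Real.log 2 < N1 * l := by
    rw [← div_lt_iff₀ hl0]
    refine hN3.trans_le ?_
    exact_mod_cast (le_max_right _ _).trans (le_max_right _ _)
  obtain ⟨n, hn, hlac⟩ := choose_n A hinf N1 ω hω m
  have hn0 : ∀ h, 0 < n h := fun h => (hn h).1.1
  choose y hy0 hyb hya hξ1 hden using fun h => point α a b ha0 hb0 hab hbd c (n h) (hn h).1.2 ρ hρ
    ((pow_le_pow_of_le_one hρ0.le hρ1.le ((le_max_left _ _).trans (hn h).2)).trans hk.le)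
  let D := ∏ h, n h
  have hD0 : 0 < D := Finset.prod_pos (fun h _ => hn0 h)
  let r : Fin m → ℕ := fun h => ∏ x ∈ Finset.univ.erase h, n x
  have hr : ∀ h, 0 < r h := fun h => Finset.prod_pos (fun x _ => hn0 x)
  have hnr : ∀ h, n h * r h = D := fun h => Finset.mul_prod_erase _ _ (Finset.mem_univ h)
  have hnrR : ∀ h, (n h : ℝ) * r h = D := fun h => by exact_mod_cast hnr h
  have hDR : (0 : ℝ) < D := by exact_mod_cast hD0
  obtain ⟨P, hP0, hdeg, hw, hGe, hNP⟩ := aux r hr ε hε0 (by linarith) hm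
  set S := ∑ h, r h with hS
  have hSN : (N1 : ℝ) * S ≤ m * D := by
    have : N1 * S ≤ m * D := by
      rw [hS, Finset.mul_sum]
      calc ∑ h, N1 * r h ≤ ∑ h : Fin m, D := by
            apply Finset.sum_le_sum
            intro h _
            rw [← hnr h]
            exact Nat.mul_le_mul_right _ (hn h).2
        _ = _ := by simp
    exact_mod_cast this
  have hSR : (∑ x, (r x : ℝ)) = S := by rw [hS]; push_cast; rfl
  have hS0 : (0 : ℝ) ≤ S := by positivity
  have hNpos : (0 : ℝ) < N P := by exact_mod_cast N_pos P hP0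
  have hlogN : Real.log (N P) ≤ S * (3 * Real.log 2) := by
    have h8 : (N P : ℝ) ≤ 8 ^ S := by exact_mod_cast hNP
    have := Real.log_le_log hNpos h8
    rw [Real.log_pow] at this
    have e : Real.log 8 = 3 * Real.log 2 := by
      rw [show (8 : ℝ) = 2 ^ 3 by norm_num, Real.log_pow]; norm_num
    rwa [e] at this
  obtain ⟨J, hJw, hJ⟩ := hroth r (fun h => (a : ℚ) ^ n h / y h) P hP0 hr
    (by
      intro i j hij
      have h1 := hlac i j hij
      have hnj : (0 : ℝ) < n j := by exact_mod_cast hn0 j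
      have hri : (0 : ℝ) ≤ r i := by positivity
      have h2 := hnrR i
      have h3 := hnrR j
      have h4 : (r i : ℝ) * n j ≤ ω * r j * n j := by
        calc (r i : ℝ) * n j ≤ r i * (ω * n i) := by gcongr
          _ = ω * (n i * r i) := by ring
          _ = ω * (n j * r j) := by rw [h2, h3]
          _ = _ := by ring
      exact le_of_mul_le_mul_right h4 hnj)
    hdeg
    (by
      intro h
      rw [hSR]
      have h1 : (n h : ℝ) * Real.log 2 ≤ Real.log (((a : ℚ) ^ n h / y h : ℚ).den : ℝ) := by
        rw [← Real.log_pow]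
        apply Real.log_le_log (by positivity)
        have := (Nat.pow_le_pow_left hb2 (n h)).trans (hden h)
        exact_mod_cast this
      have hrh : (0 : ℝ) ≤ ω * r h := by positivity
      have h2 := mul_le_mul_of_nonneg_left h1 hrh
      have h3 : ω * r h * (n h * Real.log 2) = ω * Real.log 2 * D := by
        rw [← hnrR h]; ring
      rw [h3] at h2
      refine le_trans ?_ h2
      have h4 : Real.log (N P) + 2 * m * S ≤ (3 * Real.log 2 + 2 * m) * S := by linarith
      refine h4.trans ?_
      have h5 : (m : ℝ) * ((3 * Real.log 2 + 2 * m) * S) ≤ m * (ω * Real.log 2 * D) := by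
        calc (m : ℝ) * ((3 * Real.log 2 + 2 * m) * S) = ((3 * Real.log 2 + 2 * m) * m) * S := by
              ring
          _ ≤ (N1 * (ω * Real.log 2)) * S := by gcongr
          _ = (ω * Real.log 2) * (N1 * S) := by ring
          _ ≤ (ω * Real.log 2) * (m * D) := by gcongr
          _ = _ := by ring
      exact le_of_mul_le_mul_left h5 (by linarith))
  have hJw' : wt (fun h => 1 / (r h : ℝ)) J ≤ ε * m := hJw.trans (le_mul_of_one_le_right hε0.le hmR)
  set T := (1 / 2 - 2 * ε) * m * D with hT
  have hT0 : 0 ≤ T := by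
    have : 0 ≤ 1 / 2 - 2 * ε := by linarith
    positivity
  have hfin := core n r D a b ⌈T⌉₊ hr hnr ha0 hb0 y hy0 hyb hya ρ hρ0.le hρ1.le _ (fun h => rfl)
    hξ1 ε hε0 P hdeg hw hGe hNP J hJw' hJ (Nat.ceil_lt_add_one hT0)
  have hsT : T ≤ ⌈T⌉₊ := Nat.le_ceil T
  set s := ⌈T⌉₊
  have ha' : (a : ℝ) ≠ 0 := by positivity
  have hb' : (b : ℝ) ≠ 0 := by positivity
  have hlogs := Real.log_le_log (by positivity) hfin
  rw [Real.log_mul (by positivity) (by positivity), Real.log_mul (by positivity) (by positivity),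
    Real.log_pow, Real.log_pow, Real.log_pow, Real.log_pow, Real.log_mul ha' hb', hρ,
    Real.log_div (by positivity) ha', Real.log_mul hc0.ne' hb', ← hS] at hlogs
  push_cast at hlogs
  have h1 : (s : ℝ) * (2 * Real.log a + l) ≤ 7 * S * Real.log 2 + m * D * Real.log a := by
    rw [hl]; linarith
  have h2 : T * (2 * Real.log a + l) ≤ 7 * S * Real.log 2 + m * D * Real.log a :=
    (mul_le_mul_of_nonneg_right hsT (by positivity)).trans h1
  have hmD : (0 : ℝ) < m * D := by positivity
  have h3 : (m * D : ℝ) * ((1 / 2 - 2 * ε) * l - 4 * ε * Real.log a) ≤ 7 * S * Real.log 2 := by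
    rw [hT] at h2; linarith
  have h4 : l / 8 ≤ (1 / 2 - 2 * ε) * l - 4 * ε * Real.log a := by
    have := mul_le_mul_of_nonneg_right hε8 hl0.le
    linarith
  have h5 : (m * D : ℝ) * (l / 8) ≤ 7 * S * Real.log 2 :=
    (mul_le_mul_of_nonneg_left h4 hmD.le).trans h3
  have h6 : (m * D : ℝ) * (N1 * l) ≤ (m * D) * (56 * Real.log 2) := by
    have hN0 : (0 : ℝ) ≤ N1 := by positivity
    calc (m * D : ℝ) * (N1 * l) = 8 * N1 * ((m * D) * (l / 8)) := by ring
      _ ≤ 8 * N1 * (7 * S * Real.log 2) := by gcongr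
      _ = 56 * Real.log 2 * (N1 * S) := by ring
      _ ≤ 56 * Real.log 2 * (m * D) := by gcongr
      _ = _ := by ring
  have h7 := le_of_mul_le_mul_left h6 hmD
  linarith

end
end Mah

/-- Mahler's theorem (1957): for a non-integral rational `α > 1` and `0 < c < 1`,
there are only finitely many positive integers `n` with `‖α^n‖ < c^n`, where
`‖x‖ = |x - round x|` is the distance to the nearest integer. -/
theorem mahler_1957 (α : ℚ) (hα : 1 < α) (hnotint : ¬ ∃ m : ℤ, α = m)
    (c : ℝ) (hc0 : 0 < c) (hc1 : c < 1) :
    {n : ℕ | 0 < n ∧ |((α : ℝ)) ^ n - round (((α : ℝ)) ^ n)| < c ^ n}.Finite := by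
  exact Mah.main α hα hnotint c hc0 hc1
end

section
/- Let α be a real, positive algebraic number and h the order of the group of roots of unity in the splitting field of the minimal polynomial of α over ℚ. Then Tr_{ℚ(α)/ℚ}(α^n) = 0 for infinitely many natural numbers n if and only if α ∉ ℚ(α^h). -/
open IntermediateField

lemma aux_dvd {R : Type*} [CommRing R] [IsDomain R] (q : R) (A B : Polynomial R) (s : Finset R)
    (hA : A.degree < s.card) (h : ∀ t ∈ s, (A + Polynomial.C q * B).eval t = 0) (x : R) :
    q ∣ (A + Polynomial.C q * B).eval x := by
  classical
  set g : Polynomial R := ∏ t ∈ s, (Polynomial.X - Polynomial.C t) with hg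
  have hgm : g.Monic := Polynomial.monic_prod_of_monic _ _ fun t _ => Polynomial.monic_X_sub_C t
  have hgd : g.degree = s.card := by
    rw [hg, Polynomial.degree_prod]; simp
  have hP : A + Polynomial.C q * B =
      g * (Polynomial.C q * (B /ₘ g)) + (A + Polynomial.C q * (B %ₘ g)) := by
    conv_lhs => rw [← Polynomial.modByMonic_add_div B g]
    ring
  have hR : A + Polynomial.C q * (B %ₘ g) = 0 := by
    by_contra hne
    have hdeg : (A + Polynomial.C q * (B %ₘ g)).degree < s.card := by
      refine lt_of_le_of_lt (Polynomial.degree_add_le _ _) (max_lt hA ?_)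
      rw [← Polynomial.smul_eq_C_mul]
      refine lt_of_le_of_lt (Polynomial.degree_smul_le _ _) ?_
      rw [← hgd]; exact Polynomial.degree_modByMonic_lt _ hgm
    apply hne
    refine Polynomial.eq_zero_of_natDegree_lt_card_of_eval_eq_zero' _ s ?_
      ((Polynomial.natDegree_lt_iff_degree_lt hne).2 hdeg)
    intro t ht
    have h1 := h t ht
    have h2 : g.eval t = 0 := by
      rw [hg, Polynomial.eval_prod]
      exact Finset.prod_eq_zero ht (by simp)
    rw [hP, Polynomial.eval_add, Polynomial.eval_mul, h2, zero_mul, zero_add] at h1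
    exact h1
  rw [hP, hR, add_zero, Polynomial.eval_mul, Polynomial.eval_mul, Polynomial.eval_C]
  exact ⟨g.eval x * (B /ₘ g).eval x, by ring⟩

lemma aux_factorial (p : ℕ) [hp : Fact p.Prime] (j : ℕ) :
    ((j.factorial : ℕ) : ℤ_[p]) ∣ (p : ℤ_[p]) ^ j := by
  obtain ⟨v, m, hm, hv⟩ : ∃ v m, ¬ p ∣ m ∧ j.factorial = p ^ v * m := by
    obtain ⟨v, m, h1, h2⟩ := Nat.exists_eq_pow_mul_and_not_dvd (Nat.factorial_ne_zero j) p
      hp.out.ne_one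
    exact ⟨v, m, h1, h2⟩
  have hvj : v ≤ j := by
    refine le_trans ?_ (padicValNat_factorial_le (p := p) j)
    exact (padicValNat_dvd_iff_le (Nat.factorial_ne_zero j)).1 ⟨m, hv⟩
  have hu : IsUnit (m : ℤ_[p]) := by
    rw [PadicInt.isUnit_iff, PadicInt.norm_def]
    simp only [PadicInt.coe_natCast]
    exact Padic.norm_natCast_eq_one_iff.2 ((Nat.Prime.coprime_iff_not_dvd hp.out).2 hm)
  rw [hv]; push_cast
  exact (hu.mul_right_dvd).2 (pow_dvd_pow _ hvj)

lemma aux_skolem' {R : Type*} [CommRing R] [IsDomain R] [CharZero R] (q : R) (b : ℕ → R)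
    (c : ℕ → R) (hc : ∀ j, q ^ j = (j.factorial : R) * c j) (f : ℕ → R)
    (hf : ∀ k n, k ≤ n → f k = ∑ j ∈ Finset.range (n + 1), (k.choose j : R) * (q ^ (2 * j) * b j))
    (hinf : {k : ℕ | f k = 0}.Infinite) (t k : ℕ) : q ^ k ∣ f t := by
  classical
  let P : Finset ℕ → Polynomial R := fun s =>
    ∑ j ∈ s, Polynomial.C (c j * q ^ j * b j) * descPochhammer R j
  have hPev : ∀ k n, k ≤ n → (P (Finset.range (n+1))).eval (k : R) = f k := by
    intro k n hkn
    rw [hf k n hkn, Polynomial.eval_finsetSum]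
    refine Finset.sum_congr rfl fun j _ => ?_
    rw [Polynomial.eval_mul, Polynomial.eval_C, descPochhammer_eval_eq_descFactorial,
      Nat.descFactorial_eq_factorial_mul_choose, two_mul, pow_add]
    push_cast
    nth_rewrite 2 [hc j]
    ring
  obtain ⟨s, hs, hsk⟩ := hinf.exists_subset_card_eq k
  obtain ⟨n, hn⟩ : ∃ n, t ≤ n ∧ k ≤ n ∧ ∀ i ∈ s, i ≤ n :=
    ⟨max (max t k) (s.sup id), by simp, by simp,
      fun i hi => le_max_of_le_right (Finset.le_sup (f := id) hi)⟩
  obtain ⟨hn1, hn2, hn3⟩ := hn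
  obtain ⟨B, hsplit⟩ : ∃ B, P (Finset.range (n+1)) =
      P (Finset.range k) + Polynomial.C (q ^ k) * B := by
    refine ⟨∑ j ∈ Finset.Ico k (n+1),
      Polynomial.C (c j * q ^ (j - k) * b j) * descPochhammer R j, ?_⟩
    simp only [P]
    rw [← Finset.sum_range_add_sum_Ico _ (show k ≤ n + 1 by omega), Finset.mul_sum]
    congr 1
    refine Finset.sum_congr rfl fun j hj => ?_
    have : q ^ j = q ^ k * q ^ (j - k) := by
      rw [← pow_add]; congr 1; have := (Finset.mem_Ico.1 hj).1; omega
    rw [← mul_assoc, ← Polynomial.C_mul, this]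
    congr 2
    ring
  have hdeg : (P (Finset.range k)).degree < (k : ℕ) := by
    refine lt_of_le_of_lt (Polynomial.degree_sum_le _ _) ?_
    rw [Finset.sup_lt_iff (by exact WithBot.bot_lt_coe k)]
    intro j hj
    rw [← Polynomial.smul_eq_C_mul]
    refine lt_of_le_of_lt (Polynomial.degree_smul_le _ _) ?_
    refine lt_of_le_of_lt Polynomial.degree_le_natDegree ?_
    rw [descPochhammer_natDegree]
    exact_mod_cast Finset.mem_range.1 hj
  have hd := aux_dvd (q ^ k) (P (Finset.range k)) B (s.image (fun i : ℕ => (i : R)))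
    (by rw [Finset.card_image_of_injective _ Nat.cast_injective, hsk]; exact hdeg)
    (by
      rw [← hsplit]
      intro x hx
      obtain ⟨i, hi, rfl⟩ := Finset.mem_image.1 hx
      rw [hPev i n (hn3 i hi)]
      exact hs hi) (t : R)
  rw [← hsplit, hPev t n hn1] at hd
  exact hd

lemma aux_skolem (p : ℕ) [hp : Fact p.Prime] (b : ℕ → ℤ) (f : ℕ → ℤ)
    (hf : ∀ k, f k = ∑ j ∈ Finset.range (k + 1), (k.choose j : ℤ) * ((p : ℤ) ^ (2 * j) * b j))
    (hinf : {k : ℕ | f k = 0}.Infinite) (t : ℕ) : f t = 0 := by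
  choose c hc using aux_factorial p
  have hext : ∀ k n, k ≤ n →
      f k = ∑ j ∈ Finset.range (n + 1), (k.choose j : ℤ) * ((p : ℤ) ^ (2 * j) * b j) := by
    intro k n hkn
    rw [hf]
    refine Finset.sum_subset (Finset.range_mono (by omega)) ?_
    intro j _ hj
    rw [Finset.mem_range, not_lt] at hj
    rw [Nat.choose_eq_zero_of_lt (by omega)]; simp
  have key : ∀ k : ℕ, (p : ℤ) ^ k ∣ f t := by
    intro k
    have hd := aux_skolem' (p : ℤ_[p]) (fun j => (b j : ℤ_[p])) c hc (fun k => (f k : ℤ_[p]))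
      (by intro k n hkn; rw [hext k n hkn]; push_cast; rfl)
      (by simpa only [Int.cast_eq_zero] using hinf) t k
    rw [← PadicInt.norm_int_le_pow_iff_dvd, PadicInt.norm_le_pow_iff_mem_span_pow,
      Ideal.mem_span_singleton]
    exact hd
  by_contra hne
  have h1 := Int.natAbs_dvd_natAbs.2 (key (f t).natAbs)
  have h2 := Nat.le_of_dvd (Int.natAbs_pos.2 hne) h1
  rw [Int.natAbs_pow, Int.natAbs_natCast] at h2
  exact absurd h2 (not_le.2 (Nat.lt_pow_self hp.out.one_lt))

lemma aux_form {F E : Type*} [Field F] [Field E] [Algebra F E] (φ : E →+* ℝ) (x : E)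
    (hx : 0 < φ x) (r : ℕ) (hr : 0 < r) (c0 : F) (hc0 : x ^ r = algebraMap F E c0) :
    ∃ c : F, minpoly F x = Polynomial.X ^ (minpoly F x).natDegree - Polynomial.C c := by
  have hint : IsIntegral F x := 
    IsIntegral.of_pow hr (hc0 ▸ isIntegral_algebraMap)
  set f := minpoly F x with hf
  have hfm : f.Monic := minpoly.monic hint
  set ψ : F →+* ℂ := (Complex.ofRealHom.comp φ).comp (algebraMap F E) with hψ
  have hdvd : f ∣ Polynomial.X ^ r - Polynomial.C c0 := minpoly.dvd _ _ (by simp [hc0])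
  have hsp : (f.map ψ).Splits := IsAlgClosed.splits _
  have hco := hsp.coeff_zero_eq_prod_roots_of_monic (hfm.map ψ)
  have hroots : ∀ z ∈ (f.map ψ).roots, ‖z‖ = φ x := by
    intro z hz
    have hz1 : (f.map ψ).eval z = 0 := (Polynomial.mem_roots'.1 hz).2
    have hz2 := Polynomial.eval_dvd (x := z) (Polynomial.map_dvd ψ hdvd)
    rw [hz1, zero_dvd_iff] at hz2
    simp only [Polynomial.map_sub, Polynomial.map_pow, Polynomial.map_X, Polynomial.map_C, Polynomial.eval_sub, Polynomial.eval_pow, Polynomial.eval_X, Polynomial.eval_C, sub_eq_zero] at hz2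
    have h3 : ψ c0 = ((φ x : ℝ) : ℂ) ^ r := by
      simp [hψ, ← hc0]
    rw [h3] at hz2
    have h4 := congrArg norm hz2
    rw [norm_pow, norm_pow, Complex.norm_real, Real.norm_of_nonneg hx.le] at h4
    exact (pow_left_inj₀ (norm_nonneg _) hx.le hr.ne').1 h4
  have hprod : ‖(f.map ψ).roots.prod‖ = φ x ^ f.natDegree := by
    have h1 : ‖(f.map ψ).roots.prod‖ = ((f.map ψ).roots.map (fun z => ‖z‖)).prod :=
      map_multiset_prod (normHom : ℂ →*₀ ℝ) _
    rw [h1, Multiset.map_congr rfl hroots, Multiset.map_const', Multiset.prod_replicate,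
      ← hsp.natDegree_eq_card_roots, Polynomial.natDegree_map]
  have hnorm := congrArg norm hco
  rw [norm_mul, hprod, Polynomial.coeff_map] at hnorm
  have hn2 : |φ (algebraMap F E (f.coeff 0))| = φ (x ^ f.natDegree) := by
    simpa [hψ] using hnorm
  obtain ⟨c, hc⟩ : ∃ c : F, x ^ f.natDegree = algebraMap F E c := by
    rcases abs_choice (φ (algebraMap F E (f.coeff 0))) with h | h
    · rw [h] at hn2; exact ⟨_, (φ.injective hn2).symm⟩
    · rw [h, ← map_neg, ← map_neg] at hn2; exact ⟨_, (φ.injective hn2).symm⟩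
  have hpos : f.natDegree ≠ 0 := (minpoly.natDegree_pos hint).ne'
  refine ⟨c, ?_⟩
  refine (Polynomial.eq_of_monic_of_dvd_of_natDegree_le hfm (Polynomial.monic_X_pow_sub_C c hpos) (minpoly.dvd _ _ (by simp [hc])) ?_).symm
  rw [Polynomial.natDegree_X_pow_sub_C]

lemma aux_pigeon (S : Set ℕ) (hS : S.Infinite) (r : ℕ) (hr : 0 < r) :
    ∃ a, {k : ℕ | a + r * k ∈ S}.Infinite := by
  by_contra hcon
  simp only [not_exists, Set.not_infinite] at hcon
  apply hS
  refine Set.Finite.subset (Set.Finite.biUnion (Set.finite_Iio r)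
    (fun a _ => (hcon a).image (fun k => a + r * k))) ?_
  intro n hn
  simp only [Set.mem_iUnion]
  exact ⟨n % r, Nat.mod_lt _ hr, n / r, by simpa [Nat.mod_add_div] using hn, Nat.mod_add_div n r⟩

lemma aux_period {R : Type*} [CommRing R] [IsDedekindDomain R] [CharZero R] [Module.Free ℤ R]
    [Module.Finite ℤ R] (β : R) (hβ : β ≠ 0) :
    ∃ p r : ℕ, p.Prime ∧ 0 < r ∧ ∃ γ : R, β ^ r = 1 + (p : R) ^ 2 * γ := by
  set N := Ideal.absNorm (Ideal.span {β}) with hN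
  have hN0 : N ≠ 0 := by
    rw [hN, Ne, Ideal.absNorm_eq_zero_iff, Ideal.span_singleton_eq_bot]; exact hβ
  obtain ⟨δ, hδ⟩ := Ideal.mem_span_singleton.1 (Ideal.absNorm_mem (Ideal.span {β}))
  obtain ⟨p, hpN, hp⟩ := Nat.exists_infinite_primes (N + 1)
  have hcop : IsCoprime (N : ℤ) ((p : ℤ) ^ 2) := by
    have : Nat.Coprime p N := (Nat.Prime.coprime_iff_not_dvd hp).2 fun hd =>
      absurd (Nat.le_of_dvd (Nat.pos_of_ne_zero hN0) hd) (by omega)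
    exact (Nat.isCoprime_iff_coprime.2 this.symm).pow_right
  obtain ⟨u, v, huv⟩ := hcop
  set I : Ideal R := Ideal.span {(p : R) ^ 2} with hI
  have hpR : (p : R) ^ 2 ≠ 0 := pow_ne_zero _ (Nat.cast_ne_zero.2 hp.ne_zero)
  have : Finite (R ⧸ I) := Ideal.finiteQuotientOfFreeOfNeBot I (by
    rw [hI, Ne, Ideal.span_singleton_eq_bot]; exact hpR)
  have hunit : IsUnit (Ideal.Quotient.mk I β) := by
    refine IsUnit.of_mul_eq_one (Ideal.Quotient.mk I (u * δ)) ?_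
    rw [← map_mul, ← map_one (Ideal.Quotient.mk I), Ideal.Quotient.eq, hI, Ideal.mem_span_singleton]
    refine ⟨-v, ?_⟩
    have h1 := congrArg (Int.cast : ℤ → R) huv
    push_cast at h1
    rw [hδ] at h1
    linear_combination h1
  obtain ⟨w, hw⟩ := hunit
  refine ⟨p, Nat.card (R ⧸ I)ˣ, hp, Nat.card_pos, ?_⟩
  have h2 : Ideal.Quotient.mk I (β ^ Nat.card (R ⧸ I)ˣ) = Ideal.Quotient.mk I 1 := by
    rw [map_pow, ← hw, ← Units.val_pow_eq_pow_val, pow_card_eq_one']; simp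
  rw [Ideal.Quotient.eq, hI, Ideal.mem_span_singleton] at h2
  obtain ⟨γ, hγ⟩ := h2
  exact ⟨γ, by linear_combination hγ⟩

lemma aux_sml_int {K : Type*} [Field K] [NumberField K] (β : NumberField.RingOfIntegers K)
    (hβ : β ≠ 0)
    (hinf : {n : ℕ | Algebra.trace ℤ (NumberField.RingOfIntegers K) (β ^ n) = 0}.Infinite) :
    ∃ a r : ℕ, 0 < r ∧
      ∀ k, Algebra.trace ℤ (NumberField.RingOfIntegers K) (β ^ (a + r * k)) = 0 := by
  obtain ⟨p, r, hp, hr, γ, hγ⟩ := aux_period β hβ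
  have : Fact p.Prime := ⟨hp⟩
  obtain ⟨a, ha⟩ := aux_pigeon _ hinf r hr
  refine ⟨a, r, hr, fun k => ?_⟩
  refine aux_skolem p (fun j => Algebra.trace ℤ (NumberField.RingOfIntegers K) (β ^ a * γ ^ j))
    (fun k => Algebra.trace ℤ (NumberField.RingOfIntegers K) (β ^ (a + r * k))) ?_ ha k
  intro k
  have : β ^ (a + r * k) = ∑ j ∈ Finset.range (k + 1),
      ((k.choose j : ℤ) * (p : ℤ) ^ (2 * j)) • (β ^ a * γ ^ j) := by
    rw [pow_add, pow_mul, hγ, add_comm, add_pow, Finset.mul_sum]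
    refine Finset.sum_congr rfl fun j _ => ?_
    rw [zsmul_eq_mul]
    push_cast
    rw [mul_pow, pow_mul]
    ring
  simp only [this, map_sum, map_zsmul, smul_eq_mul, mul_assoc]

lemma aux_sml {K : Type*} [Field K] [NumberField K] (x : K) (hx : x ≠ 0)
    (hinf : {n : ℕ | Algebra.trace ℚ K (x ^ n) = 0}.Infinite) :
    ∃ a r : ℕ, 0 < r ∧ ∀ k, Algebra.trace ℚ K (x ^ (a + r * k)) = 0 := by
  have halg : IsAlgebraic ℤ x := (IsFractionRing.isAlgebraic_iff ℤ ℚ K).2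
    (Algebra.IsAlgebraic.isAlgebraic x)
  obtain ⟨d, hd, hint⟩ := halg.exists_integral_multiple
  let β : NumberField.RingOfIntegers K := ⟨d • x, hint⟩
  have hβ : (β : K) = d • x := rfl
  have hd' : (d : ℚ) ≠ 0 := Int.cast_ne_zero.2 hd
  have htr : ∀ n, Algebra.trace ℤ (NumberField.RingOfIntegers K) (β ^ n) = 0 ↔
      Algebra.trace ℚ K (x ^ n) = 0 := by
    intro n
    rw [← Int.cast_eq_zero (α := ℚ), Algebra.coe_trace_int]
    have : ((β ^ n : NumberField.RingOfIntegers K) : K) = ((d : ℚ) ^ n) • x ^ n := by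
      have hp : ((β ^ n : NumberField.RingOfIntegers K) : K) = (β : K) ^ n := rfl
      rw [hp, hβ, zsmul_eq_mul, mul_pow, Algebra.smul_def]; simp
    rw [this, map_smul, smul_eq_mul]
    simp [hd']
  have hβ0 : β ≠ 0 := by
    intro h0
    have : (β : K) = 0 := by rw [h0]; simp
    rw [hβ, zsmul_eq_mul] at this
    rcases mul_eq_zero.1 this with h | h
    · exact hd (Int.cast_eq_zero.1 h)
    · exact hx h
  obtain ⟨a, r, hr, hk⟩ := aux_sml_int β hβ0 (by simpa only [htr] using hinf)
  exact ⟨a, r, hr, fun k => (htr _).1 (hk k)⟩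

lemma aux_torsion_finite (H : Type*) [Field H] [NumberField H] :
    Finite (CommGroup.torsion Hˣ) := by
  have hfin := NumberField.Embeddings.finite_of_norm_le H ℂ 1
  have := hfin.to_subtype
  have hmem : ∀ u : CommGroup.torsion Hˣ, ((u : Hˣ) : H) ∈
      {x : H | IsIntegral ℤ x ∧ ∀ φ : H →+* ℂ, ‖φ x‖ ≤ 1} := by
    intro u
    obtain ⟨n, hn, h1⟩ := isOfFinOrder_iff_pow_eq_one.1 u.2
    have h2 : ((u : Hˣ) : H) ^ n = 1 := by rw [← Units.val_pow_eq_pow_val, h1]; simp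
    refine ⟨IsIntegral.of_pow hn (h2 ▸ isIntegral_one), fun φ => ?_⟩
    have h3 : ‖φ ((u : Hˣ) : H)‖ ^ n = 1 := by rw [← norm_pow, ← map_pow, h2]; simp
    exact ((pow_eq_one_iff_of_nonneg (norm_nonneg _) hn.ne').1 h3).le
  refine Finite.of_injective (fun u => (⟨_, hmem u⟩ :
    {x : H | IsIntegral ℤ x ∧ ∀ φ : H →+* ℂ, ‖φ x‖ ≤ 1})) ?_
  intro u v huv
  exact Subtype.ext (Units.ext (congrArg Subtype.val huv))

lemma aux_dvd_h {K : Type*} [Field K] [NumberField K] (φ : K →+* ℝ) (g : K) (hg : 0 < φ g)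
    (L : IntermediateField ℚ K) (m : ℕ) (hm : m ≠ 0) (c : L)
    (hc : minpoly L g = Polynomial.X ^ m - Polynomial.C c) :
    m ∣ Nat.card (CommGroup.torsion ((minpoly ℚ g).SplittingFieldˣ)) := by
  set f := minpoly ℚ g with hf
  let H := f.SplittingField
  have hsp : (f.map (algebraMap ℚ f.SplittingField)).Splits := Polynomial.SplittingField.splits f
  let ψ : f.SplittingField →ₐ[ℚ] ℂ := Polynomial.SplittingField.lift f (IsAlgClosed.splits _)
  have himg := hsp.image_rootSet ψ
  have hf0 : f ≠ 0 := minpoly.ne_zero (Algebra.IsIntegral.isIntegral g)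
  let χ : K →+* ℂ := Complex.ofRealHom.comp φ
  have hχg : χ g ≠ 0 := (map_ne_zero χ).2 (fun h => by simp [h] at hg)
  set ζ : ℂ := Complex.exp (2 * Real.pi * Complex.I / m) with hζ
  have hprim : IsPrimitiveRoot ζ m := Complex.isPrimitiveRoot_exp m hm
  have hgm : g ^ m = algebraMap L K c := by
    have := minpoly.aeval L g
    rw [hc] at this
    simpa [sub_eq_zero] using this
  -- membership of roots
  have hroot : ∀ z : ℂ, z ^ m = 1 → z * χ g ∈ f.rootSet ℂ := by
    intro z hz
    rw [Polynomial.mem_rootSet]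
    refine ⟨hf0, ?_⟩
    have hd : minpoly L g ∣ f.map (algebraMap ℚ L) := minpoly.dvd_map_of_isScalarTower ℚ L g
    have h2 := Polynomial.eval_dvd (x := z * χ g)
      (Polynomial.map_dvd (χ.comp (algebraMap L K)) hd)
    rw [hc] at h2
    have h3 : (Polynomial.map (χ.comp (algebraMap L K))
        (Polynomial.X ^ m - Polynomial.C c)).eval (z * χ g) = 0 := by
      simp only [Polynomial.map_sub, Polynomial.map_pow, Polynomial.map_X, Polynomial.map_C,
        Polynomial.eval_sub, Polynomial.eval_pow, Polynomial.eval_X, Polynomial.eval_C,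
        RingHom.comp_apply, ← hgm, mul_pow, hz, map_pow, one_mul, sub_self]
    rw [h3, zero_dvd_iff, Polynomial.map_map, Polynomial.eval_map] at h2
    rw [Polynomial.aeval_def]
    rw [← h2]
    congr 1
    exact RingHom.ext_rat _ _
  have h1 := hroot 1 (one_pow m)
  have hz := hroot ζ hprim.pow_eq_one
  rw [← himg] at h1 hz
  obtain ⟨y1, -, hy1⟩ := h1
  obtain ⟨y2, -, hy2⟩ := hz
  rw [one_mul] at hy1
  have hψζ : ψ (y2 / y1) = ζ := by
    rw [map_div₀, hy1, hy2, mul_div_assoc, div_self hχg, mul_one]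
  have hprim' : IsPrimitiveRoot (y2 / y1) m := by
    refine IsPrimitiveRoot.of_map_of_injective (f := ψ) ?_ ψ.injective
    rw [hψζ]; exact hprim
  have hu := hprim'.isUnit hm
  obtain ⟨u, hu⟩ := hu
  have hord : orderOf u = m := by
    rw [← orderOf_units, hu]; exact hprim'.eq_orderOf.symm
  have hut : u ∈ CommGroup.torsion (f.SplittingFieldˣ) := by
    refine orderOf_pos_iff.1 (by rw [hord]; omega)
  rw [← hord, ← Subgroup.orderOf_mk u hut]
  exact orderOf_dvd_natCard _

lemma aux_main {K : Type*} [Field K] [NumberField K] (φ : K →+* ℝ) (g : K) (hg : 0 < φ g)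
    (h : ℕ) (hh : h = Nat.card (CommGroup.torsion ((minpoly ℚ g).SplittingFieldˣ))) :
    {n : ℕ | Algebra.trace ℚ K (g ^ n) = 0}.Infinite ↔ g ∉ ℚ⟮g ^ h⟯ := by
  have hg0 : g ≠ 0 := fun h => by simp [h] at hg
  have : NumberField (minpoly ℚ g).SplittingField := { }
  have := aux_torsion_finite (minpoly ℚ g).SplittingField
  have hh0 : 0 < h := by rw [hh]; exact Nat.card_pos
  have hform : ∀ r, 0 < r → ∃ c, minpoly ℚ⟮g ^ r⟯ g =
      Polynomial.X ^ (minpoly ℚ⟮g ^ r⟯ g).natDegree - Polynomial.C c := fun r hr =>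
    aux_form φ g hg r hr (AdjoinSimple.gen ℚ (g ^ r)) rfl
  have hdpos : ∀ r, 0 < (minpoly ℚ⟮g ^ r⟯ g).natDegree := fun r =>
    minpoly.natDegree_pos (Algebra.IsIntegral.isIntegral g)
  constructor
  · intro hinf hmem
    obtain ⟨a, r, hr, hk⟩ := aux_sml g hg0 hinf
    obtain ⟨c, hc⟩ := hform r hr
    set m := (minpoly ℚ⟮g ^ r⟯ g).natDegree with hm
    have hgm : g ^ m = algebraMap ℚ⟮g ^ r⟯ K c := by
      have := minpoly.aeval ℚ⟮g ^ r⟯ g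
      rw [hc] at this
      simpa [sub_eq_zero] using this
    have hdvd : m ∣ h := hh ▸ aux_dvd_h φ g hg _ m (hdpos r).ne' c hc
    have hgh : g ^ h ∈ ℚ⟮g ^ r⟯ := by
      obtain ⟨e, rfl⟩ := hdvd
      rw [pow_mul, hgm]
      exact pow_mem c.2 e
    have hgr : g ∈ ℚ⟮g ^ r⟯ := (adjoin_simple_le_iff.2 hgh) hmem
    have hinv : (g ^ a)⁻¹ ∈ ℚ⟮g ^ r⟯ := inv_mem (pow_mem hgr a)
    rw [← IntermediateField.mem_toSubalgebra,
      IntermediateField.adjoin_simple_toSubalgebra_of_isAlgebraic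
        (Algebra.IsAlgebraic.isAlgebraic _), Algebra.adjoin_singleton_eq_range_aeval] at hinv
    obtain ⟨P, hP⟩ := hinv
    have hz : Algebra.trace ℚ K (g ^ a * Polynomial.aeval (g ^ r) P) = 0 := by
      rw [Polynomial.aeval_eq_sum_range, Finset.mul_sum, map_sum]
      refine Finset.sum_eq_zero fun i _ => ?_
      rw [mul_smul_comm, ← pow_mul, ← pow_add, map_smul, hk, smul_zero]
    have hP' : Polynomial.aeval (g ^ r) P = (g ^ a)⁻¹ := hP
    rw [hP', mul_inv_cancel₀ (pow_ne_zero a hg0), ← map_one (algebraMap ℚ K),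
      Algebra.trace_algebraMap] at hz
    simp at hz
    exact Module.finrank_pos.ne' hz
  · intro hmem
    obtain ⟨c, hc⟩ := hform h hh0
    set m := (minpoly ℚ⟮g ^ h⟯ g).natDegree with hm
    have hm2 : 2 ≤ m := by
      by_contra hlt
      have hm1 : m = 1 := by have := hdpos h; omega
      have := minpoly.aeval ℚ⟮g ^ h⟯ g
      rw [hc, hm1] at this
      have h3 : g = algebraMap ℚ⟮g ^ h⟯ K c := by simpa [sub_eq_zero] using this
      apply hmem
      have h5 : algebraMap ℚ⟮g ^ h⟯ K c ∈ ℚ⟮g ^ h⟯ := c.2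
      rwa [← h3] at h5
    have htr : Algebra.trace ℚ⟮g ^ h⟯ K g = 0 := by
      rw [trace_eq_finrank_mul_minpoly_nextCoeff, Polynomial.nextCoeff, ← hm, if_neg (by omega),
        hc, Polynomial.coeff_sub, Polynomial.coeff_X_pow, Polynomial.coeff_C,
        if_neg (by omega), if_neg (by omega)]
      simp
    refine Set.infinite_of_injective_forall_mem (f := fun k : ℕ => 1 + h * k) ?_ ?_
    · intro x y hxy
      have : h * x = h * y := by simpa using hxy
      exact Nat.eq_of_mul_eq_mul_left hh0 this
    · intro k
      have h4 : g ^ (1 + h * k) = (AdjoinSimple.gen ℚ (g ^ h)) ^ k • g := by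
        rw [Algebra.smul_def, map_pow, AdjoinSimple.algebraMap_gen]; ring
      change Algebra.trace ℚ K (g ^ (1 + h * k)) = 0
      rw [h4, ← Algebra.trace_trace (S := ℚ⟮g ^ h⟯), map_smul, htr, smul_zero, map_zero]

/-- Theorem 5 (int3real): for a real positive algebraic `α`, with `h` the order of the group
of roots of unity of the splitting field of its minimal polynomial, the trace
`Tr_{ℚ(α)/ℚ}(αⁿ)` vanishes for infinitely many `n` iff `α ∉ ℚ(α^h)`. -/
theorem zero_trace_infinitely_often_real (α : ℝ) (hpos : 0 < α) (halg : IsAlgebraic ℚ α)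
    (h : ℕ)
    (hh : h = Nat.card (CommGroup.torsion ((minpoly ℚ α).SplittingFieldˣ))) :
    {n : ℕ | Algebra.trace ℚ ℚ⟮α⟯ ((IntermediateField.AdjoinSimple.gen ℚ α) ^ n) = 0}.Infinite
      ↔ α ∉ ℚ⟮α ^ h⟯ := by
  have : FiniteDimensional ℚ ℚ⟮α⟯ := adjoin.finiteDimensional halg.isIntegral
  have : NumberField ℚ⟮α⟯ := { }
  have hmp : minpoly ℚ (AdjoinSimple.gen ℚ α) = minpoly ℚ α := minpoly_gen ℚ α
  rw [aux_main (ℚ⟮α⟯.val : ℚ⟮α⟯ →+* ℝ) (AdjoinSimple.gen ℚ α)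
    (by simpa using hpos) h (by rw [hmp]; exact hh), not_iff_not]
  have hmap : IntermediateField.map ℚ⟮α⟯.val ℚ⟮(AdjoinSimple.gen ℚ α) ^ h⟯ = ℚ⟮α ^ h⟯ := by
    rw [IntermediateField.adjoin_map, Set.image_singleton]; simp
  rw [← hmap]
  constructor
  · intro hx
    exact ⟨_, hx, by simp⟩
  · rintro ⟨y, hy, hyα⟩
    have : y = AdjoinSimple.gen ℚ α := Subtype.ext (by simpa using hyα)
    have hy' : y ∈ ℚ⟮(AdjoinSimple.gen ℚ α) ^ h⟯ := hy
    rwa [this] at hy'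
end
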